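/- Let Ω ⊆ ℝ² be a bounded open convex set, and let E ⊆ closure(Ω) be a finite union of closed convex sets with a prescribed boundary intersection with ∂Ω. Suppose ψ ∈ BV(B), where B is an open ball containing closure(Ω), satisfies ψ = 0 a.e. in a closed set F₁ ⊆ closure(Ω) that is the closure of a piecewise Lipschitz set. Let l be a segment in ∂(conv(F₁)) \ ∂F₁ and U the open region enclosed between ∂F₁ and l, and define ψ′ = 0 on U and ψ′ = ψ elsewhere. Then 𝒜(ψ′; B) − |F₁ ∪ closure(U)| ≤ 𝒜(ψ; B) − |F₁|, where 𝒜 denotes the relaxed area functional and |·| Lebesgue measure. -/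

import Mathlib

open Set Filter MeasureTheory Bornology
open scoped Topology ENNReal NNReal

noncomputable abbrev E2 := EuclideanSpace ℝ (Fin 2)

/-- Divergence of a vector field on ℝ². -/
noncomputable def diver (g : E2 → E2) (x : E2) : ℝ :=
  LinearMap.trace ℝ E2 (fderiv ℝ g x : E2 →ₗ[ℝ] E2)

/-- The `L¹`-relaxed area functional (dual formulation). -/
noncomputable def relaxedArea (U : Set E2) (ψ : E2 → ℝ) : ℝ≥0∞ :=
  ⨆ (g : E2 → E2) (h : E2 → ℝ) (_ : ContDiff ℝ 1 g) (_ : ContDiff ℝ 1 h)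
    (_ : tsupport g ⊆ U) (_ : tsupport h ⊆ U)
    (_ : ∀ x, ‖g x‖ ^ 2 + h x ^ 2 ≤ 1),
    ENNReal.ofReal (∫ x in U, (ψ x * diver g x + h x))

/-- A bounded open set whose boundary is a Lipschitz Jordan curve (our rendering of
"Lipschitz open set"). -/
def LipschitzJordanDomain (V : Set E2) : Prop :=
  IsOpen V ∧ IsBounded V ∧
  ∃ (γ : ℝ → E2) (L : ℝ≥0), LipschitzWith L γ ∧ Function.Periodic γ 1 ∧
    Set.InjOn γ (Set.Ico 0 1) ∧ γ '' Set.Icc 0 1 = frontier V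

/-- Piecewise Lipschitz set: a finite union of Lipschitz open sets. -/
def PiecewiseLipschitz (S : Set E2) : Prop :=
  ∃ (n : ℕ) (A : Fin n → Set E2), (∀ i, LipschitzJordanDomain (A i)) ∧ S = ⋃ i, A i

/-!
Let `(g, h)` be a pair of test fields for `𝒜(𝟙_{Uᶜ} ψ; B)`. It is changed near `U` into a test pair
for `𝒜(ψ; B)`: on `U` one puts `(G, 0)`, where `|G| ≤ 1`, `div G = 0`, and `G` has the same normal
component as `g` along `l`: near `Ū`, `G` is the normal component of `g` on the line through `l`,
extended constantly in the normal direction. The pairs `(g + χ (G - g), (1 - χ) h)` with cutoffs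
`χ ↓ 𝟙_{Ū}` are admissible, and in the limit only `∫_U h ≤ |U|` is lost, provided that
`∫ ψ ∇χ · (G - g)` leaves no boundary term. On `l` the normal component of `G - g` vanishes. On
`∂F₁` one uses that `ψ = 0` on `F₁`, on almost every line parallel to an axis: slices of `F₁` and
`Ū` have no isolated points there, so that at a boundary point off `l` one leaves `Ū` into `F₁`.
-/

section ArcComplement

theorem exists_continuous_log {A : Type*} [TopologicalSpace A] [SimplyConnectedSpace A]
    [LocallyPathConnectedSpace A] (f : C(A, ℂ)) (hf : ∀ a, f a ≠ 0) :
    ∃ M : C(A, ℂ), ∀ a, Complex.exp (M a) = f a := by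
  obtain ⟨a₀⟩ : Nonempty A := inferInstance
  obtain ⟨M, ⟨-, hM⟩, -⟩ := Complex.isCoveringMapOn_exp.existsUnique_continuousMap_lifts
    f (a₀ := a₀) (e₀ := Complex.log (f a₀)) (Complex.exp_log (hf a₀)) hf
  exact ⟨M, congrFun hM⟩

theorem exists_continuous_exp_eq_sub_on_arc {γ : ℝ → ℂ} (hγ : Continuous γ) {u v : ℝ}
    (huv : u ≤ v) (hinj : InjOn γ (Icc u v)) {z₀ : ℂ} (hz₀ : z₀ ∉ γ '' Icc u v) :
    ∃ L : C(ℂ, ℂ), ∀ z ∈ γ '' Icc u v, Complex.exp (L z) = z - z₀ := by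
  obtain ⟨M, hM⟩ := exists_continuous_log
    (⟨fun t => γ (projIcc u v huv t) - z₀, by fun_prop⟩ : C(ℝ, ℂ)) fun t h =>
      hz₀ ⟨_, (projIcc u v huv t).2, sub_eq_zero.mp h⟩
  have hemb : Topology.IsClosedEmbedding (fun t : Icc u v => γ t) :=
    Continuous.isClosedEmbedding (by fun_prop) fun a b h => Subtype.ext (hinj a.2 b.2 h)
  obtain ⟨L, hL⟩ := ContinuousMap.exists_extension' hemb
    (⟨fun t : Icc u v => M t, by fun_prop⟩ : C(Icc u v, ℂ))
  refine ⟨L, ?_⟩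
  rintro _ ⟨t, ht, rfl⟩
  have hLt : L (γ t) = M t := congrFun hL ⟨t, ht⟩
  have hMt : Complex.exp (M t) = γ (projIcc u v huv t) - z₀ := hM t
  rw [hLt, hMt, projIcc_of_mem huv ht]

theorem not_forall_exp_comp_circle_eq (M : C(ℂ, ℂ)) (z₀ r : ℂ) :
    ¬ ∀ θ : ℝ, Complex.exp (M (z₀ + r * Complex.exp (θ * Complex.I))) =
      r * Complex.exp (θ * Complex.I) := by
  intro hM
  have hr : r ≠ 0 := fun h => Complex.exp_ne_zero _ ((hM 0).trans (by simp [h]))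
  let D : ℝ → ℂ := fun θ => M (z₀ + r * Complex.exp (θ * Complex.I)) - θ * Complex.I
  have hDc : Continuous D := by fun_prop
  have hDe : ∀ θ, Complex.exp (D θ) = r := by
    intro θ
    simp only [D]
    rw [Complex.exp_sub, hM]
    field_simp
  have hD : D = fun _ => D 0 :=
    Complex.isCoveringMap_exp.eq_of_comp_eq hDc continuous_const (by funext θ; simp [hDe]) 0 rfl
  have h2π := congrFun hD (2 * Real.pi)
  simp only [D] at h2π
  push_cast at h2π
  rw [Complex.exp_two_pi_mul_I] at h2π
  simp [Real.pi_ne_zero] at h2π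

-- Otherwise a logarithm of `z - z₀` along the arc, `z₀ ∈ Z`, would extend `z - z₀` from the outside
-- of `Z` to a nowhere zero map of the plane, and `z - z₀` would have a logarithm on a large circle.
theorem eq_empty_of_frontier_subset_arc {γ : ℝ → ℂ} (hγ : Continuous γ) {u v : ℝ} (huv : u ≤ v)
    (hinj : InjOn γ (Icc u v)) {Z : Set ℂ} (hZ : IsBounded Z) (hdisj : Disjoint Z (γ '' Icc u v))
    (hfr : frontier Z ⊆ γ '' Icc u v) : Z = ∅ := by
  by_contra hne
  obtain ⟨z₀, hz₀⟩ := nonempty_iff_ne_empty.mpr hne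
  obtain ⟨L, hL⟩ := exists_continuous_exp_eq_sub_on_arc hγ huv hinj (disjoint_left.mp hdisj hz₀)
  classical
  let F : ℂ → ℂ := fun z => if z ∈ closure Z then Complex.exp (L z) else z - z₀
  have hFc : Continuous F :=
    Continuous.if (fun a ha => hL a (hfr (frontier_closure_subset ha))) (by fun_prop) (by fun_prop)
  have hF0 : ∀ z, F z ≠ 0 := by
    intro z
    by_cases h : z ∈ closure Z
    · simp [F, h]
    · simp only [F, h, if_false]
      exact fun h' => h (sub_eq_zero.mp h' ▸ subset_closure hz₀)
  obtain ⟨M, hM⟩ := exists_continuous_log ⟨F, hFc⟩ hF0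
  obtain ⟨r, hr0, hr⟩ := hZ.closure.subset_ball_lt 0 z₀
  refine not_forall_exp_comp_circle_eq M z₀ r fun θ => (hM _).trans ?_
  have hfar : z₀ + r * Complex.exp (θ * Complex.I) ∉ closure Z := fun h => by
    simpa [abs_of_pos hr0, Complex.norm_exp_ofReal_mul_I] using hr h
  simp [F, hfar]

end ArcComplement

section Uncut

theorem subset_interior_or_subset_compl_closure_of_isPreconnected {α : Type*} [TopologicalSpace α]
    {S N : Set α} (hS : IsPreconnected S) (h : Disjoint S (frontier N)) :
    S ⊆ interior N ∨ S ⊆ (closure N)ᶜ := by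
  refine IsPreconnected.subset_or_subset isOpen_interior isClosed_closure.isOpen_compl
    (disjoint_left.mpr fun x hx hx' => hx' (interior_subset_closure hx)) (fun x hx => ?_) hS
  by_contra hx'
  simp only [mem_union, mem_compl_iff, not_or, not_not] at hx'
  exact disjoint_left.mp h hx ⟨hx'.2, hx'.1⟩

variable {X : Type*} [NormedAddCommGroup X] [NormedSpace ℝ X]

/-- A set that the boundary of a compact convex set `K` cannot cut into a part inside and a part
outside `K`. Connected sets are of this kind, and so are the interiors of Jordan curves. -/
def UncutByConvex (N : Set X) : Prop :=
  ∀ K : Set X, IsCompact K → Convex ℝ K → Disjoint N (frontier K) →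
    (N ∩ interior K).Nonempty → N ⊆ interior K

theorem uncutByConvex_of_isPreconnected {N : Set X} (hN : IsPreconnected N) : UncutByConvex N := by
  rintro K - - hdisj ⟨x, hxN, hxK⟩
  exact (subset_interior_or_subset_compl_closure_of_isPreconnected hN hdisj).resolve_right
    fun h => h hxN (interior_subset_closure hxK)

theorem UncutByConvex.preimage {Y : Type*} [NormedAddCommGroup Y] [NormedSpace ℝ Y] {N : Set X}
    (hN : UncutByConvex N) (e : Y ≃L[ℝ] X) : UncutByConvex (e ⁻¹' N) := by
  rintro K hK hKc hdisj ⟨y, hyN, hyK⟩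
  have hfr : e '' frontier K = frontier (e '' K) := e.toHomeomorph.image_frontier K
  have hint : e '' interior K = interior (e '' K) := e.toHomeomorph.image_interior K
  have hsub := hN (e '' K) (hK.image e.continuous) (hKc.linear_image e.toLinearMap) ?_
    ⟨e y, hyN, hint ▸ mem_image_of_mem e hyK⟩
  · intro z hz
    obtain ⟨z', hz', h⟩ := hint.symm ▸ hsub hz
    exact e.injective h ▸ hz'
  · rw [← hfr, disjoint_right]
    rintro _ ⟨z, hz, rfl⟩ hzN
    exact disjoint_left.mp hdisj hzN hz

/-- `γ` is a periodic parametrisation of a simple closed curve. -/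
structure IsJordanCurve {α : Type*} [TopologicalSpace α] (γ : ℝ → α) : Prop where
  continuous : Continuous γ
  periodic : Function.Periodic γ 1
  injOn : InjOn γ (Ico 0 1)

theorem IsJordanCurve.injOn_Ico {α : Type*} [TopologicalSpace α] {γ : ℝ → α}
    (hγ : IsJordanCurve γ) (a : ℝ) : InjOn γ (Ico a (a + 1)) := by
  intro x hx y hy hxy
  have hfract (t : ℝ) : γ (Int.fract t) = γ t := by
    rw [Int.fract]
    simpa using hγ.periodic.sub_int_mul_eq (x := t) ⌊t⌋
  obtain ⟨k, hk⟩ := Int.fract_eq_fract.mp (hγ.injOn ⟨Int.fract_nonneg x, Int.fract_lt_one x⟩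
    ⟨Int.fract_nonneg y, Int.fract_lt_one y⟩ (by rw [hfract, hfract, hxy]))
  have hk1 : k < 1 := by exact_mod_cast (by linarith [hx.2, hy.1] : (k : ℝ) < 1)
  have hk2 : -1 < k := by exact_mod_cast (by linarith [hx.1, hy.2] : (-1 : ℝ) < k)
  obtain rfl : k = 0 := by omega
  rwa [Int.cast_zero, sub_eq_zero] at hk

theorem IsJordanCurve.range_eq {α : Type*} [TopologicalSpace α] {γ : ℝ → α}
    (hγ : IsJordanCurve γ) : range γ = γ '' Icc 0 1 := by
  simpa using (hγ.periodic.image_Icc one_pos 0).symm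

theorem range_subset_of_frontier_subset {γ : ℝ → ℂ} (hγ : IsJordanCurve γ) {Z : Set ℂ}
    (hZ : IsBounded Z) (hne : Z.Nonempty) (hdisj : Disjoint Z (range γ))
    (hfr : frontier Z ⊆ range γ) : range γ ⊆ frontier Z := by
  rintro _ ⟨a, rfl⟩
  by_contra ha
  obtain ⟨ε, hε, hball⟩ := Metric.eventually_nhds_iff.mp
    (hγ.continuous.continuousAt.eventually (isClosed_frontier.isOpen_compl.mem_nhds ha))
  set δ := min (ε / 2) (1 / 4)
  have hδ : 0 < δ := by positivity
  have hδε : δ < ε := lt_of_le_of_lt (min_le_left _ _) (by linarith)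
  have hδ4 : δ ≤ 1 / 4 := min_le_right _ _
  refine hne.ne_empty (eq_empty_of_frontier_subset_arc hγ.continuous
    (u := a + δ) (v := a + 1 - δ) (by linarith)
    ((hγ.injOn_Ico a).mono ((Icc_subset_Ico_iff (by linarith)).mpr ⟨by linarith, by linarith⟩)) hZ
    (hdisj.mono_right (image_subset_range _ _)) ?_)
  intro x hx
  obtain ⟨t, rfl⟩ := hfr hx
  obtain ⟨t', ht', hte⟩ := hγ.periodic.exists_mem_Ico one_pos t a
  rw [hte] at hx ⊢
  refine ⟨t', ⟨not_lt.mp fun h => hball ?_ hx, not_lt.mp fun h => ?_⟩, rfl⟩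
  · rw [Real.dist_eq, abs_lt]
    constructor <;> linarith [ht'.1]
  · refine hball (y := t' - 1) ?_ (by rwa [hγ.periodic.sub_eq])
    rw [Real.dist_eq, abs_lt]
    constructor <;> linarith [ht'.2]

theorem exists_mem_frontier_notMem_of_convex {N K : Set X} (hN : IsBounded N) (hK : Convex ℝ K)
    {z z' : X} (hzK : z ∈ K) (hz' : z' ∈ N) (hz'K : z' ∉ K) : ∃ w ∈ frontier N, w ∉ K := by
  set ray : ℝ → X := fun t => z + t • (z' - z)
  have hne : 0 < ‖z' - z‖ := norm_pos_iff.mpr fun h => hz'K (sub_eq_zero.mp h ▸ hzK)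
  have hmeet : ¬ Disjoint (ray '' Ici 1) (frontier N) := fun hdis => by
    rcases subset_interior_or_subset_compl_closure_of_isPreconnected
      (isPreconnected_Ici.image ray (by fun_prop)) hdis with hin | hout
    · obtain ⟨r, -, hr⟩ := hN.subset_ball_lt 0 z
      have hball := hr (interior_subset (hin ⟨max 1 (r / ‖z' - z‖), by simp, rfl⟩))
      simp only [ray, Metric.mem_ball, dist_self_add_left, norm_smul, Real.norm_eq_abs] at hball
      have hle := (le_max_right 1 (r / ‖z' - z‖)).trans (le_abs_self _)
      rw [div_le_iff₀ hne] at hle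
      linarith
    · exact hout ⟨1, self_mem_Ici, by simp [ray]⟩ (subset_closure hz')
  obtain ⟨_, ⟨t, ht, rfl⟩, hw⟩ := not_disjoint_iff.mp hmeet
  refine ⟨ray t, hw, fun hwK => hz'K ?_⟩
  have ht0 : 0 < t := one_pos.trans_le ht
  have hz'_eq : z' = AffineMap.lineMap z (ray t) t⁻¹ := by
    simp [ray, AffineMap.lineMap_apply_module', smul_smul, ht0.ne']
  rw [hz'_eq]
  exact hK.lineMap_mem hzK hwK ⟨by positivity, inv_le_one_of_one_le₀ ht⟩

theorem frontier_inter_interior_subset {α : Type*} [TopologicalSpace α] {N K : Set α}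
    (hN : IsOpen N) (hK : IsClosed K) (hdisj : Disjoint N (frontier K)) :
    frontier (N ∩ interior K) ⊆ frontier N ∩ K := by
  intro x hx
  have hxK : x ∈ K :=
    hK.closure_subset_iff.mpr (inter_subset_right.trans interior_subset) hx.1
  refine ⟨⟨closure_mono inter_subset_left hx.1, fun hxN => hx.2 ?_⟩, hxK⟩
  rw [(hN.inter isOpen_interior).interior_eq]
  rw [hN.interior_eq] at hxN
  exact ⟨hxN, by_contra fun h => disjoint_left.mp hdisj hxN ⟨subset_closure hxK, h⟩⟩

theorem uncutByConvex_of_isJordanCurve_complex {γ : ℝ → ℂ} (hγ : IsJordanCurve γ) {N : Set ℂ}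
    (hNo : IsOpen N) (hNb : IsBounded N) (hfr : frontier N = range γ) : UncutByConvex N := by
  intro K hK hKc hdisj hne
  by_contra hsub
  obtain ⟨z', hz'N, hz'K⟩ := not_subset.mp hsub
  obtain ⟨z, hzN, hzK⟩ := hne
  obtain ⟨w, hw, hwK⟩ := exists_mem_frontier_notMem_of_convex hNb hKc (interior_subset hzK) hz'N
    fun h => disjoint_left.mp hdisj hz'N ⟨subset_closure h, hz'K⟩
  have hfrK := frontier_inter_interior_subset hNo hK.isClosed hdisj
  refine hwK (hfrK (range_subset_of_frontier_subset hγ (hNb.subset inter_subset_left)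
    ⟨z, hzN, hzK⟩ ?_ ((hfrK.trans inter_subset_left).trans hfr.subset) (hfr ▸ hw))).2
  rw [← hfr]
  exact (disjoint_iff_inter_eq_empty.mpr hNo.inter_frontier_eq).mono_left inter_subset_left

theorem uncutByConvex_of_isJordanCurve (hX : Module.finrank ℝ X = 2) {γ : ℝ → X}
    (hγ : IsJordanCurve γ) {N : Set X} (hNo : IsOpen N) (hNb : IsBounded N)
    (hfr : frontier N = range γ) : UncutByConvex N := by
  have : FiniteDimensional ℝ X := Module.finite_of_finrank_eq_succ hX
  let e : X ≃L[ℝ] ℂ :=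
    ContinuousLinearEquiv.ofFinrankEq (hX.trans Complex.finrank_real_complex.symm)
  have hcurve : IsJordanCurve (e ∘ γ) :=
    ⟨e.continuous.comp hγ.continuous, hγ.periodic.comp e, e.injective.comp_injOn hγ.injOn⟩
  have hbounded : IsBounded (e '' N) :=
    (hNb.isCompact_closure.image e.continuous).isBounded.subset (image_mono subset_closure)
  have hfrontier : frontier (e '' N) = range (e ∘ γ) := by
    rw [range_comp, ← hfr]
    exact (e.toHomeomorph.image_frontier N).symm
  have huncut :=
    uncutByConvex_of_isJordanCurve_complex hcurve (e.isOpenMap N hNo) hbounded hfrontier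
  simpa [e.injective.preimage_image] using huncut.preimage e

end Uncut

section VerticalSlices

theorem notMem_of_closure_slice_inter_Icc_eq_singleton {N : Set (ℝ × ℝ)} (hN : IsOpen N)
    {s y c d : ℝ} (hy : y ∈ Ioo c d) (hsing : Prod.mk s ⁻¹' closure N ∩ Icc c d = {y}) :
    ∀ t ∈ Icc c d, (s, t) ∉ N := by
  intro t ht htN
  have hsub : Prod.mk s ⁻¹' N ∩ Icc c d ⊆ {y} :=
    hsing ▸ inter_subset_inter_left _ (preimage_mono subset_closure)
  have hopen : IsOpen (Prod.mk s ⁻¹' N ∩ Ioo c d) :=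
    (hN.preimage (Continuous.prodMk_right s)).inter isOpen_Ioo
  obtain rfl : t = y := hsub ⟨htN, ht⟩
  refine not_isOpen_singleton t ?_
  convert hopen
  exact (Subset.antisymm ((inter_subset_inter_right _ Ioo_subset_Icc_self).trans hsub)
    (singleton_subset_iff.mpr ⟨htN, hy⟩)).symm

theorem UncutByConvex.subset_rectangle {N : Set (ℝ × ℝ)} (hN : UncutByConvex N) {a b c d : ℝ}
    (hab : a ≤ b) (hcd : c ≤ d) (hvert : ∀ t ∈ Icc c d, (a, t) ∉ N ∧ (b, t) ∉ N)
    (hhor : ∀ s ∈ Icc a b, (s, c) ∉ N ∧ (s, d) ∉ N) (hne : (N ∩ Ioo a b ×ˢ Ioo c d).Nonempty) :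
    N ⊆ Ioo a b ×ˢ Ioo c d := by
  have hint : interior (Icc a b ×ˢ Icc c d) = Ioo a b ×ˢ Ioo c d := by
    rw [interior_prod_eq, interior_Icc, interior_Icc]
  rw [← hint] at hne ⊢
  refine hN _ (isCompact_Icc.prod isCompact_Icc) ((convex_Icc a b).prod (convex_Icc c d)) ?_ hne
  rw [disjoint_right, frontier_prod_eq, frontier_Icc hab, frontier_Icc hcd, closure_Icc,
    closure_Icc]
  rintro ⟨s, t⟩ (⟨hs, rfl | rfl⟩ | ⟨rfl | rfl, ht⟩)
  exacts [(hhor s hs).1, (hhor s hs).2, (hvert t ht).1, (hvert t ht).2]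

theorem countable_of_not_two_sided_accumulation {A : Set ℝ}
    (hA : ∀ s ∈ A, (∀ r < s, (A ∩ Ioo r s).Nonempty) → ¬ ∀ r > s, (A ∩ Ioo s r).Nonempty) :
    A.Countable := by
  refine (countable_setOfPred_isolated_right_within (s := A).union
    (countable_setOfPred_isolated_left_within (s := A))).mono fun s hs => ?_
  by_contra hacc
  simp only [mem_union, mem_ofPred_eq, not_or, not_and] at hacc
  have : (𝓝[A ∩ Ioi s] s).NeBot := ⟨hacc.1 hs⟩
  have : (𝓝[A ∩ Iio s] s).NeBot := ⟨hacc.2 hs⟩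
  refine hA s hs (fun r hr => ?_) fun r hr => ?_
  · obtain ⟨a, ⟨haA, has⟩, har⟩ := ((eventually_mem_nhdsWithin (s := A ∩ Iio s)).and
      (mem_nhdsWithin_of_mem_nhds (Ioi_mem_nhds hr))).exists
    exact ⟨a, haA, har, has⟩
  · obtain ⟨b, ⟨hbA, hbs⟩, hbr⟩ := ((eventually_mem_nhdsWithin (s := A ∩ Ioi s)).and
      (mem_nhdsWithin_of_mem_nhds (Iio_mem_nhds hr))).exists
    exact ⟨b, hbA, hbs, hbr⟩

-- Two-sided accumulation points are impossible: the rectangles over short intervals with endpoints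
-- in this set do not cut `N`, so they contain all of `N` as soon as they meet it.
theorem UncutByConvex.countable_slice_eq_singleton {N : Set (ℝ × ℝ)} (hN : UncutByConvex N)
    (hNo : IsOpen N) (c d : ℝ) :
    {s | ∃ y ∈ Ioo c d, Prod.mk s ⁻¹' closure N ∩ Icc c d = {y}}.Countable := by
  set A := {s | ∃ y ∈ Ioo c d, Prod.mk s ⁻¹' closure N ∩ Icc c d = {y}}
  have hA : ∀ s ∈ A, ∀ t ∈ Icc c d, (s, t) ∉ N := fun s ⟨y, hy, hsing⟩ =>
    notMem_of_closure_slice_inter_Icc_eq_singleton hNo hy hsing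
  refine countable_of_not_two_sided_accumulation fun s hs hleft hright => ?_
  obtain ⟨y, hy, hsing⟩ := id hs
  have hcd : c ≤ d := (hy.1.trans hy.2).le
  have hedge : ∀ t ∈ Icc c d, t ≠ y → ∀ᶠ s' in 𝓝 s, (s', t) ∉ N := by
    intro t ht hty
    have hmem : (s, t) ∉ closure N := fun h => hty (hsing.subset ⟨h, ht⟩)
    exact ((Continuous.prodMk_left t).continuousAt.eventually
      (isClosed_closure.isOpen_compl.mem_nhds hmem)).mono fun _ h h' => h (subset_closure h')
  obtain ⟨η, hη, hball⟩ := Metric.eventually_nhds_iff_ball.mp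
    ((hedge c (left_mem_Icc.mpr hcd) hy.1.ne).and (hedge d (right_mem_Icc.mpr hcd) hy.2.ne'))
  rw [Real.ball_eq_Ioo] at hball
  have htrap : ∀ a ∈ A ∩ Ioo (s - η) s, ∀ b ∈ A ∩ Ioo s (s + η), N ⊆ Ioo a b ×ˢ Ioo c d := by
    rintro a ⟨ha, hasη⟩ b ⟨hb, hbsη⟩
    refine hN.subset_rectangle (hasη.2.trans hbsη.1).le hcd
      (fun t ht => ⟨hA a ha t ht, hA b hb t ht⟩)
      (fun s' hs' => hball s' ⟨hasη.1.trans_le hs'.1, hs'.2.trans_lt hbsη.2⟩) ?_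
    rw [inter_comm]
    exact mem_closure_iff.mp (hsing.superset rfl).1 _ (isOpen_Ioo.prod isOpen_Ioo)
      ⟨⟨hasη.2, hbsη.1⟩, hy⟩
  obtain ⟨a, ha⟩ := hleft (s - η) (sub_lt_self s hη)
  obtain ⟨b, hb⟩ := hright (s + η) (lt_add_of_pos_right s hη)
  obtain ⟨z, hz⟩ : N.Nonempty := closure_nonempty_iff.mp ⟨(s, y), (hsing.superset rfl).1⟩
  rcases lt_trichotomy z.1 s with hzs | hzs | hzs
  · obtain ⟨a', ha', hza'⟩ := hleft (max z.1 (s - η)) (max_lt hzs (sub_lt_self s hη))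
    have hmax := max_lt_iff.mp hza'.1
    exact lt_asymm hmax.1 (htrap a' ⟨ha', hmax.2, hza'.2⟩ b hb hz).1.1
  · exact hA s hs z.2 (Ioo_subset_Icc_self (htrap a ha b hb hz).2) (hzs ▸ hz)
  · obtain ⟨b', hb', hzb'⟩ := hright (min z.1 (s + η)) (lt_min hzs (lt_add_of_pos_right s hη))
    have hmin := lt_min_iff.mp hzb'.2
    exact lt_asymm hmin.1 (htrap a ha b' ⟨hb', hzb'.1, hmin.2⟩ hz).1.2

theorem UncutByConvex.countable_not_preperfect_slice {N : Set (ℝ × ℝ)} (hN : UncutByConvex N)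
    (hNo : IsOpen N) : {s | ¬ Preperfect (Prod.mk s ⁻¹' closure N)}.Countable := by
  refine (countable_iUnion fun q : ℚ × ℚ =>
    hN.countable_slice_eq_singleton hNo q.1 q.2).mono fun s hs => ?_
  simp only [mem_ofPred_eq, Preperfect, not_forall, accPt_iff_frequently_nhdsNE,
    not_frequently] at hs
  obtain ⟨y, hy, hisol⟩ := hs
  obtain ⟨ε, hε, hball⟩ := Metric.eventually_nhds_iff_ball.mp (eventually_nhdsWithin_iff.mp hisol)
  rw [Real.ball_eq_Ioo] at hball
  obtain ⟨c, hc, hcy⟩ := exists_rat_btwn (sub_lt_self y hε)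
  obtain ⟨d, hyd, hd⟩ := exists_rat_btwn (lt_add_of_pos_right y hε)
  refine mem_iUnion.mpr ⟨(c, d), y, ⟨hcy, hyd⟩, Subset.antisymm (fun t ht => ?_) ?_⟩
  · exact by_contra fun hty => hball t ⟨hc.trans_le ht.2.1, ht.2.2.trans_lt hd⟩ hty ht.1
  · exact singleton_subset_iff.mpr ⟨hy, hcy.le, hyd.le⟩

end VerticalSlices

section FiniteFibers

theorem volume_image_eq_zero_of_lipschitzWith {f : ℝ → ℝ} {L : ℝ≥0} (hf : LipschitzWith L f)
    {A : Set ℝ} (hA : volume A = 0) : volume (f '' A) = 0 := by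
  rw [← hausdorffMeasure_real] at hA ⊢
  exact le_antisymm ((hf.hausdorffMeasure_image_le zero_le_one A).trans_eq (by rw [hA, mul_zero]))
    zero_le

theorem volume_image_setOf_hasDerivAt_zero (f : ℝ → ℝ) :
    volume (f '' {u | HasDerivAt f 0 u}) = 0 :=
  addHaar_image_eq_zero_of_det_fderivWithin_eq_zero volume
    (f' := fun _ => 0) (fun u hu => by
      simpa using (show HasDerivAt f 0 u from hu).hasFDerivAt.hasFDerivWithinAt) (by simp)

theorem ae_finite_fiber_of_lipschitzWith {f : ℝ → ℝ} {L : ℝ≥0} (hf : LipschitzWith L f) {K : Set ℝ}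
    (hK : IsCompact K) : ∀ᵐ s : ℝ, {u ∈ K | f u = s}.Finite := by
  have hdiff : volume (f '' {u | ¬ DifferentiableAt ℝ f u}) = 0 :=
    volume_image_eq_zero_of_lipschitzWith hf hf.ae_differentiableAt
  filter_upwards [measure_eq_zero_iff_ae_notMem.mp hdiff,
    measure_eq_zero_iff_ae_notMem.mp (volume_image_setOf_hasDerivAt_zero f)] with s hs hs0
  by_contra hinf
  obtain ⟨u, -, hacc⟩ :=
    Set.Infinite.exists_accPt_of_subset_isCompact hinf hK (sep_subset K _)
  have hfu : f u = s :=
    (isClosed_eq hf.continuous continuous_const).closure_subset_iff.mpr (fun v hv => hv.2)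
      (mem_closure_iff_clusterPt.mpr hacc.clusterPt)
  have hd : DifferentiableAt ℝ f u := by_contra fun h => hs ⟨u, h, hfu⟩
  have hd0 : deriv f u ≠ 0 := fun h => hs0 ⟨u, h ▸ hd.hasDerivAt, hfu⟩
  exact accPt_iff_frequently_nhdsNE.mp hacc
    ((hd.hasDerivAt.eventually_ne hd0).mono fun v hv hv' => hv hv'.2)

end FiniteFibers

section Slices

variable {X : Type*} [NormedAddCommGroup X] [NormedSpace ℝ X]

/-- The slice of `S` over `s` in the coordinates given by `e`. -/
def slice (e : (ℝ × ℝ) ≃L[ℝ] X) (s : ℝ) (S : Set X) : Set ℝ :=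
  {y | e (s, y) ∈ S}

@[simp]
theorem mem_slice {e : (ℝ × ℝ) ≃L[ℝ] X} {s y : ℝ} {S : Set X} : y ∈ slice e s S ↔ e (s, y) ∈ S :=
  Iff.rfl

theorem ae_finite_slice_image_of_lipschitzWith (e : (ℝ × ℝ) ≃L[ℝ] X) {γ : ℝ → X} {L : ℝ≥0}
    (hγ : LipschitzWith L γ) {K : Set ℝ} (hK : IsCompact K) :
    ∀ᵐ s, (slice e s (γ '' K)).Finite := by
  have hfst : LipschitzWith _ fun u => (e.symm (γ u)).1 :=
    ((ContinuousLinearMap.fst ℝ ℝ ℝ).comp (e.symm : X →L[ℝ] ℝ × ℝ)).lipschitz.comp hγ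
  filter_upwards [ae_finite_fiber_of_lipschitzWith hfst hK] with s hs
  refine (hs.image fun u => (e.symm (γ u)).2).subset ?_
  rintro y ⟨u, hu, h⟩
  exact ⟨u, ⟨hu, by simp [h]⟩, by simp [h]⟩

theorem UncutByConvex.ae_preperfect_slice_closure {N : Set X} (hN : UncutByConvex N)
    (hNo : IsOpen N) (e : (ℝ × ℝ) ≃L[ℝ] X) : ∀ᵐ s, Preperfect (slice e s (closure N)) := by
  have hcount := (hN.preimage e).countable_not_preperfect_slice (hNo.preimage e.continuous)
  filter_upwards [hcount.ae_notMem volume] with s hs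
  have hclosure : closure (e ⁻¹' N) = e ⁻¹' closure N := (e.toHomeomorph.preimage_closure N).symm
  rwa [not_not, hclosure] at hs

theorem volume_eq_zero_of_ae_finite_slice [MeasureSpace X] [BorelSpace X] {e : (ℝ × ℝ) ≃L[ℝ] X}
    (he : MeasurePreserving e) {C : Set X} (hC : IsClosed C) (hfin : ∀ᵐ s, (slice e s C).Finite) :
    volume C = 0 := by
  rw [← he.measure_preimage hC.measurableSet.nullMeasurableSet]
  refine (Measure.measure_prod_null (hC.preimage e.continuous).measurableSet).mpr ?_
  filter_upwards [hfin] with s hs using hs.measure_zero volume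

end Slices

section LipschitzJordanDomain

variable {V : Set E2}

theorem LipschitzJordanDomain.uncutByConvex (hV : LipschitzJordanDomain V) : UncutByConvex V := by
  obtain ⟨hVo, hVb, γ, L, hγ, hper, hinj, him⟩ := hV
  have hcurve : IsJordanCurve γ := ⟨hγ.continuous, hper, hinj⟩
  exact uncutByConvex_of_isJordanCurve (by simp) hcurve hVo hVb (him ▸ hcurve.range_eq.symm)

theorem LipschitzJordanDomain.ae_finite_slice_frontier (hV : LipschitzJordanDomain V)
    (e : (ℝ × ℝ) ≃L[ℝ] E2) : ∀ᵐ s, (slice e s (frontier V)).Finite := by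
  obtain ⟨-, -, γ, L, hγ, -, -, him⟩ := hV
  exact him ▸ ae_finite_slice_image_of_lipschitzWith e hγ isCompact_Icc

theorem LipschitzJordanDomain.ae_preperfect_slice_closure (hV : LipschitzJordanDomain V)
    (e : (ℝ × ℝ) ≃L[ℝ] E2) : ∀ᵐ s, Preperfect (slice e s (closure V)) :=
  hV.uncutByConvex.ae_preperfect_slice_closure hV.1 e

variable {S : Set E2}

theorem PiecewiseLipschitz.isBounded (hS : PiecewiseLipschitz S) : IsBounded S := by
  obtain ⟨n, A, hA, rfl⟩ := hS
  exact isBounded_iUnion.mpr fun i => (hA i).2.1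

theorem frontier_closure_iUnion_subset {α ι : Type*} [TopologicalSpace α] [Finite ι]
    (A : ι → Set α) : frontier (closure (⋃ i, A i)) ⊆ ⋃ i, frontier (A i) := by
  rintro x ⟨hx, hx'⟩
  rw [closure_closure, closure_iUnion_of_finite, mem_iUnion] at hx
  obtain ⟨i, hi⟩ := hx
  refine mem_iUnion.mpr ⟨i, hi, fun h => hx' ?_⟩
  exact interior_mono ((subset_iUnion A i).trans subset_closure) h

theorem PiecewiseLipschitz.ae_finite_slice_frontier_closure (hS : PiecewiseLipschitz S)
    (e : (ℝ × ℝ) ≃L[ℝ] E2) : ∀ᵐ s, (slice e s (frontier (closure S))).Finite := by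
  obtain ⟨n, A, hA, rfl⟩ := hS
  filter_upwards [ae_all_iff.mpr fun i => (hA i).ae_finite_slice_frontier e] with s hs
  refine (finite_iUnion hs).subset fun y hy => ?_
  simpa using frontier_closure_iUnion_subset A hy

theorem PiecewiseLipschitz.ae_preperfect_slice_closure (hS : PiecewiseLipschitz S)
    (e : (ℝ × ℝ) ≃L[ℝ] E2) : ∀ᵐ s, Preperfect (slice e s (closure S)) := by
  obtain ⟨n, A, hA, rfl⟩ := hS
  filter_upwards [ae_all_iff.mpr fun i => (hA i).ae_preperfect_slice_closure e] with s hs y hy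
  simp only [closure_iUnion_of_finite, mem_slice, mem_iUnion] at hy
  obtain ⟨i, hi⟩ := hy
  exact (hs i y hi).mono (principal_mono.mpr fun t ht =>
    closure_mono (subset_iUnion A i) ht)

end LipschitzJordanDomain

section DirectionalVariation

variable {X : Type*} [NormedAddCommGroup X] [NormedSpace ℝ X] [MeasureSpace X]

/-- The total variation on `B` of the distributional derivative of `ψ` in the direction `w` is at
most `M`. -/
def DirVariationLE (B : Set X) (ψ : X → ℝ) (w : X) (M : ℝ) : Prop :=
  ∀ θ : X → ℝ, ContDiff ℝ 1 θ → HasCompactSupport θ → tsupport θ ⊆ B → (∀ x, |θ x| ≤ 1) →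
    ∫ x, ψ x * fderiv ℝ θ x w ≤ M

variable [BorelSpace X] [FiniteDimensional ℝ X] [(volume : Measure X).IsAddHaarMeasure]

theorem integral_convolution_mul {ρ ψ k : X → ℝ} (hρ : Integrable ρ) (hψ : Integrable ψ)
    (hk : Continuous k) {C : ℝ} (hC : ∀ x, |k x| ≤ C) :
    ∫ x, convolution ρ ψ (ContinuousLinearMap.lsmul ℝ ℝ) volume x * k x =
      ∫ z, ρ z * ∫ x, ψ x * k (x + z) ∧ Integrable (fun z => ρ z * ∫ x, ψ x * k (x + z)) := by
  have hprod : Integrable (fun p : X × X => ρ p.2 * ψ (p.1 - p.2) * k p.1)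
      ((volume : Measure X).prod volume) := by
    have hconv := Integrable.convolution_integrand (ContinuousLinearMap.lsmul ℝ ℝ)
      (μ := (volume : Measure X)) (ν := volume) hρ hψ
    simpa using hconv.mul_bdd (c := C) (g := fun p : X × X => k p.1) (by fun_prop)
      (Eventually.of_forall fun p => by simpa using hC p.1)
  have hinner : ∀ z, ∫ x, ρ z * ψ (x - z) * k x = ρ z * ∫ x, ψ x * k (x + z) := by
    intro z
    rw [← integral_const_mul, ← integral_add_right_eq_self _ z]
    simp [mul_assoc]
  simp_rw [← hinner]
  refine ⟨?_, hprod.integral_prod_right⟩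
  simp_rw [convolution_def, ContinuousLinearMap.lsmul_apply, smul_eq_mul, ← integral_mul_const]
  exact integral_integral_swap hprod

theorem DirVariationLE.convolution {ψ : X → ℝ} {w : X} {M : ℝ}
    (hM : DirVariationLE univ ψ w M) (hψ : Integrable ψ) {ρ : X → ℝ} (hρ : Integrable ρ)
    (hρ0 : ∀ z, 0 ≤ ρ z) (hρ1 : ∫ z, ρ z = 1) :
    DirVariationLE univ (convolution ρ ψ (ContinuousLinearMap.lsmul ℝ ℝ) volume) w M := by
  rintro θ hθ hθs - hθ1
  have hkc : Continuous fun x => fderiv ℝ θ x w :=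
    (hθ.continuous_fderiv one_ne_zero).clm_apply continuous_const
  obtain ⟨C, hC⟩ := (hθs.fderiv_apply (𝕜 := ℝ) w).exists_bound_of_continuous hkc
  obtain ⟨hconv, hint⟩ := integral_convolution_mul hρ hψ hkc hC
  calc _ = ∫ z, ρ z * ∫ x, ψ x * fderiv ℝ θ (x + z) w := hconv
    _ ≤ ∫ z, ρ z * M := integral_mono hint (hρ.mul_const M) fun z =>
        mul_le_mul_of_nonneg_left ?_ (hρ0 z)
    _ = M := by rw [integral_mul_const, hρ1, one_mul]
  have htrans := hM (fun x => θ (x + z)) (hθ.comp (contDiff_id.add contDiff_const))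
    (hθs.comp_homeomorph (Homeomorph.addRight z)) (subset_univ _) fun x => hθ1 _
  simpa only [fderiv_comp_add_right] using htrans

theorem abs_le_mul_div_sqrt_add (t : ℝ) {ε : ℝ} (hε : 0 < ε) :
    |t| ≤ t * (t / √(t ^ 2 + ε ^ 2)) + ε := by
  set q := √(t ^ 2 + ε ^ 2)
  have hq : 0 < q := Real.sqrt_pos.2 (by positivity)
  have hq2 : q ^ 2 = t ^ 2 + ε ^ 2 := Real.sq_sqrt (by positivity)
  have hlt : |t| ≤ q := Real.abs_le_sqrt (by nlinarith)
  have hle : q ≤ |t| + ε := Real.sqrt_le_iff.2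
    ⟨by positivity, by nlinarith [abs_nonneg t, sq_abs t]⟩
  rw [← mul_div_assoc, ← sub_le_iff_le_add, le_div_iff₀ hq]
  nlinarith [hq2, hlt, abs_nonneg t, sq_abs t]

theorem abs_div_sqrt_le_one (t ε : ℝ) : |t / √(t ^ 2 + ε ^ 2)| ≤ 1 := by
  rw [abs_div, abs_of_nonneg (Real.sqrt_nonneg _)]
  exact div_le_one_of_le₀ (Real.abs_le_sqrt (by nlinarith)) (Real.sqrt_nonneg _)

theorem DirVariationLE.neg_integral_fderiv_mul_le {u : X → ℝ} {w : X} {M : ℝ}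
    (hM : DirVariationLE univ u w M) (hu : ContDiff ℝ 2 u) {θ : X → ℝ} (hθ : ContDiff ℝ 1 θ)
    (hθs : HasCompactSupport θ) (hθ1 : ∀ x, |θ x| ≤ 1) :
    -∫ x, fderiv ℝ u x w * θ x ≤ M := by
  have hu' : Continuous fun x => fderiv ℝ u x w :=
    (hu.continuous_fderiv two_ne_zero).clm_apply continuous_const
  have hθ' : Continuous fun x => fderiv ℝ θ x w :=
    (hθ.continuous_fderiv one_ne_zero).clm_apply continuous_const
  rw [← integral_mul_fderiv_eq_neg_fderiv_mul_of_integrable]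
  · exact hM θ hθ hθs (subset_univ _) hθ1
  · exact (hu'.mul hθ.continuous).integrable_of_hasCompactSupport hθs.mul_left
  · exact (hu.continuous.mul hθ').integrable_of_hasCompactSupport
      (hθs.fderiv_apply (𝕜 := ℝ) w).mul_left
  · exact (hu.continuous.mul hθ.continuous).integrable_of_hasCompactSupport hθs.mul_left
  · exact fun x _ => hu.differentiable two_ne_zero x
  · exact fun x _ => hθ.differentiable one_ne_zero x

theorem DirVariationLE.integral_mul_abs_fderiv_le {u : X → ℝ} {w : X} {M : ℝ}
    (hM : DirVariationLE univ u w M) (hu : ContDiff ℝ 2 u) {κ : X → ℝ} (hκ : ContDiff ℝ 1 κ)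
    (hκs : HasCompactSupport κ) (hκ01 : ∀ x, κ x ∈ Icc (0 : ℝ) 1) :
    ∫ x, κ x * |fderiv ℝ u x w| ≤ M := by
  have hu' : ContDiff ℝ 1 fun x => fderiv ℝ u x w :=
    (hu.fderiv_right (m := 1) (by norm_num)).clm_apply contDiff_const
  have hκi : Integrable κ := hκ.continuous.integrable_of_hasCompactSupport hκs
  have hle : ∀ ε : ℝ, 0 < ε → ∫ x, κ x * |fderiv ℝ u x w| ≤ M + ε * ∫ x, κ x := by
    intro ε hε
    set v : X → ℝ := fun x => fderiv ℝ u x w / √(fderiv ℝ u x w ^ 2 + ε ^ 2)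
    have hv : ContDiff ℝ 1 v := hu'.div
      ((hu'.pow 2).add contDiff_const |>.sqrt fun x => by positivity) fun x => by positivity
    have hκv : HasCompactSupport fun x => -(κ x * v x) := hκs.mul_right.neg
    have hdual := hM.neg_integral_fderiv_mul_le hu (hκ.mul hv).neg hκv fun x => by
      rw [abs_neg, abs_mul, abs_of_nonneg (hκ01 x).1]
      exact mul_le_one₀ (hκ01 x).2 (abs_nonneg _) (abs_div_sqrt_le_one _ _)
    have hint : Integrable fun x => -(fderiv ℝ u x w * -(κ x * v x)) :=
      ((hu'.continuous.mul (hκ.mul hv).neg.continuous).integrable_of_hasCompactSupport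
        hκv.mul_left).neg
    rw [← integral_neg] at hdual
    calc ∫ x, κ x * |fderiv ℝ u x w|
        ≤ ∫ x, (-(fderiv ℝ u x w * -(κ x * v x)) + ε * κ x) := by
          refine integral_mono ((hκ.continuous.mul
            hu'.continuous.abs).integrable_of_hasCompactSupport hκs.mul_right)
            (hint.add (hκi.const_mul ε)) fun x => ?_
          have hx := mul_le_mul_of_nonneg_left (abs_le_mul_div_sqrt_add (fderiv ℝ u x w) hε)
            (hκ01 x).1
          simp only [v]
          linarith
      _ ≤ M + ε * ∫ x, κ x := by
          rw [integral_add hint (hκi.const_mul ε), integral_const_mul]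
          gcongr
  have hlim : Tendsto (fun ε : ℝ => M + ε * ∫ x, κ x) (𝓝[>] 0) (𝓝 (M + 0 * ∫ x, κ x)) :=
    tendsto_nhdsWithin_of_tendsto_nhds (Continuous.tendsto (by fun_prop) 0)
  rw [zero_mul, add_zero] at hlim
  exact ge_of_tendsto hlim (eventually_mem_nhdsWithin.mono hle)

theorem DirVariationLE.lintegral_enorm_fderiv_le {u : X → ℝ} {w : X} {M : ℝ}
    (hM : DirVariationLE univ u w M) (hu : ContDiff ℝ 2 u) :
    ∫⁻ x, ‖fderiv ℝ u x w‖ₑ ≤ ENNReal.ofReal M := by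
  have hu' : Continuous fun x => fderiv ℝ u x w :=
    (hu.continuous_fderiv two_ne_zero).clm_apply continuous_const
  refine le_of_tendsto ((aecover_closedBall (x := (0 : X))
    (tendsto_natCast_atTop_atTop (R := ℝ))).lintegral_tendsto_of_countably_generated
    hu'.measurable.enorm.aemeasurable) (Eventually.of_forall fun n => ?_)
  let κ : ContDiffBump (0 : X) := ⟨n + 1, n + 2, by positivity, by linarith⟩
  have hint : Integrable fun x => κ x * |fderiv ℝ u x w| :=
    (κ.continuous.mul hu'.abs).integrable_of_hasCompactSupport κ.hasCompactSupport.mul_right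
  have hκ1 : ∀ x ∈ Metric.closedBall (0 : X) n, κ x = 1 := fun x hx =>
    κ.one_of_mem_closedBall (Metric.closedBall_subset_closedBall (by simp [κ]) hx)
  calc ∫⁻ x in Metric.closedBall 0 n, ‖fderiv ℝ u x w‖ₑ
      ≤ ∫⁻ x in Metric.closedBall 0 n, ENNReal.ofReal (κ x * |fderiv ℝ u x w|) :=
        setLIntegral_mono' measurableSet_closedBall fun x hx => by
          rw [hκ1 x hx, one_mul, Real.enorm_eq_ofReal_abs]
    _ ≤ ∫⁻ x, ENNReal.ofReal (κ x * |fderiv ℝ u x w|) := setLIntegral_le_lintegral _ _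
    _ = ENNReal.ofReal (∫ x, κ x * |fderiv ℝ u x w|) :=
        (ofReal_integral_eq_lintegral_ofReal hint
          (Eventually.of_forall fun x => mul_nonneg κ.nonneg (abs_nonneg _))).symm
    _ ≤ ENNReal.ofReal M := ENNReal.ofReal_le_ofReal
        (hM.integral_mul_abs_fderiv_le hu κ.contDiff κ.hasCompactSupport
          fun x => ⟨κ.nonneg, κ.le_one⟩)

end DirectionalVariation

section SegmentVariation

/-- On every segment the distributional derivative of `f` has mass at most `V`. The test functions
only vanish at the two end points, so that no C¹ extension to the line is required. -/
def SegVariationLE (f : ℝ → ℝ) (V : ℝ) : Prop :=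
  ∀ ⦃p q m : ℝ⦄, p ≤ q → ∀ ⦃η : ℝ → ℝ⦄, ContDiff ℝ 1 η → η p = 0 → η q = 0 →
    (∀ y ∈ Icc p q, |η y| ≤ m) → |∫ y in p..q, f y * deriv η y| ≤ V * m

theorem SegVariationLE.of_forall_pos_add {f : ℝ → ℝ} {V : ℝ}
    (h : ∀ ε > 0, SegVariationLE f (V + ε)) : SegVariationLE f V := by
  intro p q m hpq η hη hp hq hm
  have hlim : Tendsto (fun ε : ℝ => (V + ε) * m) (𝓝[>] 0) (𝓝 ((V + 0) * m)) :=
    tendsto_nhdsWithin_of_tendsto_nhds (Continuous.tendsto (by fun_prop) 0)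
  rw [add_zero] at hlim
  exact ge_of_tendsto hlim (eventually_mem_nhdsWithin.mono fun ε hε => h ε hε hpq hη hp hq hm)

theorem intervalIntegral_abs_le_of_lintegral_enorm_le {w : ℝ → ℝ} (hw : Continuous w) {K : ℝ}
    (hK0 : 0 ≤ K) (hK : ∫⁻ y, ‖w y‖ₑ ≤ ENNReal.ofReal K) {p q : ℝ} (hpq : p ≤ q) :
    ∫ y in p..q, |w y| ≤ K := by
  rw [intervalIntegral.integral_of_le hpq]
  calc ∫ y in Ioc p q, |w y| = (∫⁻ y in Ioc p q, ‖w y‖ₑ).toReal :=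
        integral_norm_eq_lintegral_enorm hw.aestronglyMeasurable
    _ ≤ K := ENNReal.toReal_le_of_le_ofReal hK0 ((setLIntegral_le_lintegral _ _).trans hK)

theorem abs_le_abs_add_integral_abs_deriv {u : ℝ → ℝ} (hu : ContDiff ℝ 1 u) {p q x y : ℝ}
    (hx : x ∈ Icc p q) (hy : y ∈ Icc p q) : |u y| ≤ |u x| + ∫ t in p..q, |deriv u t| := by
  have hu' : Continuous (deriv u) := hu.continuous_deriv le_rfl
  have hpq : p ≤ q := hx.1.trans hx.2
  have hincr : ∫ t in x..y, deriv u t = u y - u x :=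
    intervalIntegral.integral_deriv_eq_sub (fun t _ => hu.differentiable one_ne_zero t)
      (hu'.intervalIntegrable _ _)
  have hle : |∫ t in x..y, deriv u t| ≤ ∫ t in p..q, |deriv u t| := by
    refine (intervalIntegral.norm_integral_le_integral_norm_uIoc (f := deriv u)).trans ?_
    rw [intervalIntegral.integral_of_le hpq]
    exact setIntegral_mono_set hu'.abs.integrableOn_Ioc (Eventually.of_forall fun t => abs_nonneg _)
      (Ioc_subset_Ioc (le_min hx.1 hy.1) (max_le hx.2 hy.2)).eventuallyLE
  rw [← add_sub_cancel (u x) (u y), ← hincr]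
  exact (abs_add_le _ _).trans (by gcongr)

theorem abs_integral_mul_deriv_le {u η : ℝ → ℝ} (hu : ContDiff ℝ 1 u) (hη : ContDiff ℝ 1 η)
    {p q m : ℝ} (hpq : p ≤ q) (hp : η p = 0) (hq : η q = 0) (hm : ∀ y ∈ Icc p q, |η y| ≤ m) :
    |∫ y in p..q, u y * deriv η y| ≤ (∫ y in p..q, |deriv u y|) * m := by
  have hu' : Continuous (deriv u) := hu.continuous_deriv le_rfl
  rw [intervalIntegral.integral_mul_deriv_eq_deriv_mul
    (fun t _ => (hu.differentiable one_ne_zero t).hasDerivAt)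
    (fun t _ => (hη.differentiable one_ne_zero t).hasDerivAt) (hu'.intervalIntegrable _ _)
    ((hη.continuous_deriv le_rfl).intervalIntegrable _ _), hp, hq]
  simp only [mul_zero, sub_zero, zero_sub, abs_neg]
  calc |∫ y in p..q, deriv u y * η y| ≤ ∫ y in p..q, |deriv u y * η y| :=
        intervalIntegral.abs_integral_le_integral_abs hpq
    _ ≤ ∫ y in p..q, |deriv u y| * m := by
        refine intervalIntegral.integral_mono_on hpq
          ((hu'.mul hη.continuous).abs.intervalIntegrable _ _)
          ((hu'.abs.mul continuous_const).intervalIntegrable _ _) fun y hy => ?_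
        rw [abs_mul]
        exact mul_le_mul_of_nonneg_left (hm y hy) (abs_nonneg _)
    _ = (∫ y in p..q, |deriv u y|) * m := intervalIntegral.integral_mul_const _ _

theorem exists_forall_abs_le_of_tendsto {f : ℝ → ℝ} {u : ℕ → ℝ → ℝ}
    (hu : ∀ j, ContDiff ℝ 1 (u j)) (hlim : ∀ᵐ y, Tendsto (fun j => u j y) atTop (𝓝 (f y)))
    {p q K : ℝ} (hpq : p < q) (hK : ∀ j, ∫ y in p..q, |deriv (u j) y| ≤ K) :
    ∃ C, ∀ j, ∀ y ∈ Icc p q, |u j y| ≤ C := by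
  obtain ⟨x, hx, hxlim⟩ : ∃ x ∈ Ioo p q, Tendsto (fun j => u j x) atTop (𝓝 (f x)) := by
    by_contra! hcon
    have hnull : volume (Ioo p q) = 0 := measure_mono_null (fun y hy => hcon y hy) hlim
    simp only [Real.volume_Ioo, ENNReal.ofReal_eq_zero] at hnull
    linarith
  obtain ⟨C, hC⟩ := hxlim.norm.isBoundedUnder_le.bddAbove_range
  exact ⟨C + K, fun j y hy =>
    (abs_le_abs_add_integral_abs_deriv (hu j) (Ioo_subset_Icc_self hx) hy).trans
      (add_le_add (hC ⟨j, rfl⟩) (hK j))⟩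

theorem segVariationLE_of_tendsto {f : ℝ → ℝ} {u : ℕ → ℝ → ℝ} (hu : ∀ j, ContDiff ℝ 1 (u j))
    (hlim : ∀ᵐ y, Tendsto (fun j => u j y) atTop (𝓝 (f y))) {K : ℝ} (hK0 : 0 ≤ K)
    (hK : ∃ᶠ j in atTop, ∫⁻ y, ‖deriv (u j) y‖ₑ ≤ ENNReal.ofReal K) : SegVariationLE f K := by
  intro p q m hpq η hη hp hq hm
  have hm0 : 0 ≤ m := (abs_nonneg _).trans (hm p ⟨le_rfl, hpq⟩)
  rcases hpq.eq_or_lt with rfl | hlt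
  · simpa using mul_nonneg hK0 hm0
  obtain ⟨φ, hφ, hφK⟩ := extraction_of_frequently_atTop hK
  replace hlim : ∀ᵐ y, Tendsto (fun j => u (φ j) y) atTop (𝓝 (f y)) :=
    hlim.mono fun y hy => hy.comp hφ.tendsto_atTop
  have hsegK : ∀ j, ∫ y in p..q, |deriv (u (φ j)) y| ≤ K := fun j =>
    intervalIntegral_abs_le_of_lintegral_enorm_le ((hu _).continuous_deriv le_rfl) hK0 (hφK j) hpq
  obtain ⟨C, hC⟩ := exists_forall_abs_le_of_tendsto (fun j => hu (φ j)) hlim hlt hsegK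
  have hη' : Continuous (deriv η) := hη.continuous_deriv le_rfl
  obtain ⟨D, hD⟩ := isCompact_Icc.exists_bound_of_continuousOn hη'.continuousOn (s := Icc p q)
  have hconv : Tendsto (fun j => ∫ y in p..q, u (φ j) y * deriv η y) atTop
      (𝓝 (∫ y in p..q, f y * deriv η y)) := by
    refine intervalIntegral.tendsto_integral_filter_of_dominated_convergence (fun _ => C * D)
      (Eventually.of_forall fun j => ((hu _).continuous.mul hη').aestronglyMeasurable)
      (Eventually.of_forall fun j => Eventually.of_forall fun y hy => ?_)
      intervalIntegrable_const (hlim.mono fun y hy _ => hy.mul_const _)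
    have hy' : y ∈ Icc p q := Ioc_subset_Icc_self (uIoc_of_le hpq ▸ hy)
    rw [norm_mul]
    exact mul_le_mul (hC j y hy') (hD y hy') (norm_nonneg _) ((abs_nonneg _).trans (hC j y hy'))
  exact le_of_tendsto hconv.abs (Eventually.of_forall fun j =>
    (abs_integral_mul_deriv_le (hu _) hη hpq hp hq hm).trans
      (mul_le_mul_of_nonneg_right (hsegK j) hm0))

end SegmentVariation

section Slicing

variable {X : Type*} [NormedAddCommGroup X] [NormedSpace ℝ X]

theorem deriv_comp_prodMk (e : (ℝ × ℝ) ≃L[ℝ] X) {u : X → ℝ} (hu : Differentiable ℝ u) (s y : ℝ) :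
    deriv (fun t => u (e (s, t))) y = fderiv ℝ u (e (s, y)) (e (0, 1)) := by
  have hline : HasDerivAt (fun t => e (s, t)) (e (0, 1)) y :=
    e.hasFDerivAt.comp_hasDerivAt y ((hasDerivAt_const y s).prodMk (hasDerivAt_id y))
  exact ((hu _).hasFDerivAt.comp_hasDerivAt y hline).deriv

variable [MeasureSpace X]

theorem ae_ae_prodMk {e : (ℝ × ℝ) ≃L[ℝ] X} (he : MeasurePreserving e) {P : X → Prop}
    (hP : ∀ᵐ x, P x) : ∀ᵐ s : ℝ, ∀ᵐ y : ℝ, P (e (s, y)) :=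
  Measure.ae_ae_of_ae_prod (he.quasiMeasurePreserving.ae hP)

variable [BorelSpace X]

theorem lintegral_lintegral_prodMk {e : (ℝ × ℝ) ≃L[ℝ] X} (he : MeasurePreserving e)
    {F : X → ℝ≥0∞} (hF : Measurable F) : ∫⁻ s, ∫⁻ y, F (e (s, y)) = ∫⁻ x, F x := by
  rw [← he.lintegral_comp hF, Measure.volume_eq_prod]
  exact (lintegral_prod _ (hF.comp e.continuous.measurable).aemeasurable).symm

variable [FiniteDimensional ℝ X] [(volume : Measure X).IsAddHaarMeasure]

theorem exists_smooth_approximation {ψ : X → ℝ} (hψ : Integrable ψ) {w : X}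
    {M : ℝ} (hM : DirVariationLE univ ψ w M) :
    ∃ u : ℕ → X → ℝ, (∀ j, ContDiff ℝ 2 (u j)) ∧
      (∀ᵐ x, Tendsto (fun j => u j x) atTop (𝓝 (ψ x))) ∧
      ∀ j, ∫⁻ x, ‖fderiv ℝ (u j) x w‖ₑ ≤ ENNReal.ofReal M := by
  let ρ : ℕ → ContDiffBump (0 : X) := fun j =>
    ⟨1 / (j + 1) / 2, 1 / (j + 1), by positivity, half_lt_self (by positivity)⟩
  have hsmooth : ∀ j, ContDiff ℝ 2 (convolution ((ρ j).normed volume) ψ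
      (ContinuousLinearMap.lsmul ℝ ℝ) volume) := fun j =>
    (ρ j).hasCompactSupport_normed.contDiff_convolution_left (n := 2) _ (ρ j).contDiff_normed
      hψ.locallyIntegrable
  refine ⟨_, hsmooth, ?_, fun j => ?_⟩
  · exact ContDiffBump.ae_convolution_tendsto_right_of_locallyIntegrable (K := 2)
      tendsto_one_div_add_atTop_nhds_zero_nat (Eventually.of_forall fun j => by
        simp only [ρ]; linarith) hψ.locallyIntegrable
  · exact (hM.convolution hψ (ρ j).integrable_normed (ρ j).nonneg_normed
      (ρ j).integral_normed).lintegral_enorm_fderiv_le (hsmooth j)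

theorem DirVariationLE.exists_ae_segVariationLE {ψ : X → ℝ}
    (hψ : Integrable ψ) {e : (ℝ × ℝ) ≃L[ℝ] X} (he : MeasurePreserving e) {M : ℝ}
    (hM : DirVariationLE univ ψ (e (0, 1)) M) :
    ∃ V : ℝ → ℝ, Integrable V ∧ ∀ᵐ s, SegVariationLE (fun y => ψ (e (s, y))) (V s) := by
  obtain ⟨u, hu, hlim, hL1⟩ := exists_smooth_approximation hψ hM
  have hmeas : ∀ j, Measurable fun x => ‖fderiv ℝ (u j) x (e (0, 1))‖ₑ := fun j =>
    (((hu j).continuous_fderiv two_ne_zero).clm_apply continuous_const).measurable.enorm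
  set W : ℕ → ℝ → ℝ≥0∞ := fun j s => ∫⁻ y, ‖fderiv ℝ (u j) (e (s, y)) (e (0, 1))‖ₑ
  have hWm : ∀ j, Measurable (W j) := fun j =>
    ((hmeas j).comp e.continuous.measurable).lintegral_prod_right'
  set V : ℝ → ℝ≥0∞ := fun s => liminf (fun j => W j s) atTop
  have hVm : Measurable V := Measurable.liminf hWm
  have hV : ∫⁻ s, V s ≠ ∞ := by
    refine ne_top_of_le_ne_top ENNReal.ofReal_ne_top ((lintegral_liminf_le hWm).trans
      (liminf_le_of_le (by isBoundedDefault) fun b hb => ?_) : _ ≤ ENNReal.ofReal M)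
    obtain ⟨j, hj⟩ := hb.exists
    exact hj.trans ((lintegral_lintegral_prodMk he (hmeas j)).trans_le (hL1 j))
  refine ⟨fun s => (V s).toReal, integrable_toReal_of_lintegral_ne_top hVm.aemeasurable hV, ?_⟩
  filter_upwards [ae_ae_prodMk he hlim, ae_lt_top hVm hV] with s hs hsV
  refine .of_forall_pos_add fun ε hε => segVariationLE_of_tendsto (u := fun j y => u j (e (s, y)))
    (fun j => ((hu j).of_le one_le_two).comp (by fun_prop)) hs (by positivity) ?_
  have hlt : V s < V s + ENNReal.ofReal ε := ENNReal.lt_add_right hsV.ne (by simpa using hε)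
  refine (frequently_lt_of_liminf_lt (by isBoundedDefault) hlt).mono fun j hj => ?_
  simp_rw [deriv_comp_prodMk e ((hu j).differentiable two_ne_zero)]
  rw [ENNReal.ofReal_add ENNReal.toReal_nonneg hε.le, ENNReal.ofReal_toReal hsV.ne]
  exact hj.le

end Slicing

section CutoffSequences

variable {X Y : Type*} [NormedAddCommGroup X] [NormedSpace ℝ X] [NormedAddCommGroup Y]
  [NormedSpace ℝ Y]

/-- `χ` is a sequence of C¹ cutoff functions with values in `[0, 1]`, equal to `1` on `K` and
converging to `0` off `K` in the strongest sense: near every point of the complement the functions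
eventually vanish. -/
structure IsCutoffSeq (χ : ℕ → X → ℝ) (K : Set X) : Prop where
  contDiff : ∀ k, ContDiff ℝ 1 (χ k)
  mem_Icc : ∀ k x, χ k x ∈ Icc (0 : ℝ) 1
  eq_one : ∀ k, ∀ x ∈ K, χ k x = 1
  eventually_eq_zero : ∀ x ∉ K, ∀ᶠ z : ℕ × X in atTop ×ˢ 𝓝 x, χ z.1 z.2 = 0

theorem exists_isCutoffSeq [FiniteDimensional ℝ X] {K : Set X} (hK : IsClosed K) :
    ∃ χ : ℕ → X → ℝ, IsCutoffSeq χ K := by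
  have hcut : ∀ k : ℕ, ∃ f : X → ℝ, ContDiff ℝ 1 f ∧ (∀ x, f x ∈ Icc (0 : ℝ) 1) ∧
      (∀ x ∈ K, f x = 1) ∧ ∀ x ∉ Metric.thickening (1 / ((k : ℝ) + 1)) K, f x = 0 := by
    intro k
    obtain ⟨f, hf0, hf1, hf01⟩ := exists_contMDiffMap_zero_one_of_isClosed (n := 1)
      (modelWithCornersSelf ℝ X)
      (Metric.isOpen_thickening (δ := 1 / ((k : ℝ) + 1)) (E := K)).isClosed_compl hK
      (disjoint_compl_left_iff_subset.2 (Metric.self_subset_thickening (by positivity) K))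
    exact ⟨f, f.contMDiff.contDiff, hf01, fun x hx => hf1 hx, fun x hx => hf0 hx⟩
  choose χ hχ h01 h1 h0 using hcut
  refine ⟨χ, hχ, h01, h1, fun x hx => ?_⟩
  obtain ⟨δ, hδ, hball⟩ := Metric.isOpen_iff.1 hK.isOpen_compl x hx
  filter_upwards [(tendsto_one_div_add_atTop_nhds_zero_nat.eventually_lt_const
    (half_pos hδ)).prod_mk (Metric.ball_mem_nhds x (half_pos hδ))] with ⟨k, y⟩ ⟨hk, hy⟩
  refine h0 k y fun hmem => ?_
  obtain ⟨z, hz, hyz⟩ := Metric.mem_thickening_iff.1 hmem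
  refine hball (Metric.mem_ball'.2 ?_) hz
  linarith [dist_triangle x y z, Metric.mem_ball'.1 hy, show 1 / ((k : ℝ) + 1) < δ / 2 from hk]

variable {χ : ℕ → X → ℝ} {K : Set X}

theorem IsCutoffSeq.comp (hχ : IsCutoffSeq χ K) {g : Y → X} (hg : ContDiff ℝ 1 g) :
    IsCutoffSeq (fun k y => χ k (g y)) (g ⁻¹' K) where
  contDiff k := (hχ.contDiff k).comp hg
  mem_Icc k y := hχ.mem_Icc k (g y)
  eq_one k y hy := hχ.eq_one k (g y) hy
  eventually_eq_zero y hy :=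
    (tendsto_id.prodMap (hg.continuous.tendsto y)).eventually (hχ.eventually_eq_zero (g y) hy)

theorem IsCutoffSeq.abs_mul_le (hχ : IsCutoffSeq χ K) (k : ℕ) (x : X) (t : ℝ) :
    |χ k x * t| ≤ |t| := by
  rw [abs_mul, abs_of_nonneg (hχ.mem_Icc k x).1]
  exact mul_le_of_le_one_left (abs_nonneg _) (hχ.mem_Icc k x).2

theorem IsCutoffSeq.eventually_mul_eq_zero (hχ : IsCutoffSeq χ K) {φ : X → ℝ} {x : X}
    (hx : x ∉ K ∨ φ x = 0) : ∀ᶠ k in atTop, χ k x * φ x = 0 := by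
  rcases hx with hx | hx
  · exact (hχ.eventually_eq_zero x hx).curry.mono fun k hk => by rw [hk.self_of_nhds, zero_mul]
  · exact Eventually.of_forall fun k => by rw [hx, mul_zero]

theorem IsCutoffSeq.eventually_forall_abs_mul_lt (hχ : IsCutoffSeq χ K) {φ : X → ℝ}
    (hφ : Continuous φ) {T : Set X} (hT : IsCompact T) (hφT : ∀ x ∈ T, x ∉ K ∨ φ x = 0) {ε : ℝ}
    (hε : 0 < ε) : ∀ᶠ k in atTop, ∀ x ∈ T, |χ k x * φ x| < ε := by
  have hnear : ∀ᶠ z in atTop ×ˢ 𝓝ˢ T, |χ z.1 z.2 * φ z.2| < ε := by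
    refine hT.mem_prod_nhdsSet_of_forall fun x hx => ?_
    rcases hφT x hx with hx | hx
    · filter_upwards [hχ.eventually_eq_zero x hx] with z hz
      simpa [hz] using hε
    · have hsmall : ∀ᶠ y in 𝓝 x, |φ y| < ε :=
        hφ.abs.continuousAt.eventually_lt_const (by simpa [hx] using hε)
      exact (hsmall.prod_inr atTop).mono fun z hz => (hχ.abs_mul_le z.1 z.2 _).trans_lt hz
  exact hnear.curry.mono fun k hk => hk.self_of_nhdsSet

end CutoffSequences

section CutoffLimit

theorem integrable_mul_deriv {f η : ℝ → ℝ} (hf : Integrable f) (hη : ContDiff ℝ 1 η)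
    (hηs : HasCompactSupport η) : Integrable fun y => f y * deriv η y := by
  have hη' : Continuous (deriv η) := hη.continuous_deriv le_rfl
  obtain ⟨D, hD⟩ := hηs.deriv.exists_bound_of_continuous hη'
  exact hf.mul_bdd hη'.aestronglyMeasurable (Eventually.of_forall hD)

theorem exists_integral_mul_deriv_eq_intervalIntegral {φ : ℝ → ℝ} (hφ : HasCompactSupport φ) :
    ∃ p q : ℝ, p ≤ q ∧ tsupport φ ⊆ Ioo p q ∧ ∀ f η : ℝ → ℝ, tsupport η ⊆ tsupport φ →
      ∫ y, f y * deriv η y = ∫ y in p..q, f y * deriv η y := by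
  obtain ⟨T, hT⟩ := hφ.isCompact.isBounded.subset_ball 0
  rw [Real.ball_eq_Ioo, zero_sub, zero_add] at hT
  refine ⟨-|T|, |T|, by linarith [abs_nonneg T],
    hT.trans (Ioo_subset_Ioo (neg_le_neg (le_abs_self T)) (le_abs_self T)), fun f η hη => ?_⟩
  refine (intervalIntegral.integral_eq_integral_of_support_subset fun y hy => ?_).symm
  have hy' := hT (hη (support_deriv_subset (right_ne_zero_of_mul hy)))
  exact ⟨by linarith [hy'.1, le_abs_self T], by linarith [hy'.2, le_abs_self T]⟩

theorem SegVariationLE.abs_integral_mul_deriv_le {f η : ℝ → ℝ} {V m : ℝ} (hV : SegVariationLE f V)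
    (hη : ContDiff ℝ 1 η) (hηs : HasCompactSupport η) (hm : ∀ y, |η y| ≤ m) :
    |∫ y, f y * deriv η y| ≤ V * m := by
  obtain ⟨p, q, hpq, hsupp, heq⟩ := exists_integral_mul_deriv_eq_intervalIntegral hηs
  rw [heq f η Subset.rfl]
  exact hV hpq hη (image_eq_zero_of_notMem_tsupport fun h => (hsupp h).1.false)
    (image_eq_zero_of_notMem_tsupport fun h => (hsupp h).2.false) fun y _ => hm y

theorem eventually_nhdsWithin_forall_uIcc {y : ℝ} {S : Set ℝ} (hS : S = Iio y ∨ S = Ioi y)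
    {P : ℝ → Prop} (h : ∀ᶠ t in 𝓝[S] y, P t) :
    ∀ᶠ x in 𝓝[S] y, ∀ t ∈ uIcc y x, t ≠ y → P t := by
  rcases hS with rfl | rfl
  · obtain ⟨l, hl, hP⟩ := mem_nhdsLT_iff_exists_Ico_subset.1 h
    filter_upwards [Ico_mem_nhdsLT hl] with x hx t ht hty
    rw [uIcc_of_ge hx.2.le] at ht
    exact hP ⟨hx.1.trans ht.1, ht.2.lt_of_ne hty⟩
  · obtain ⟨r, hr, hP⟩ := mem_nhdsGT_iff_exists_Ioc_subset.1 h
    filter_upwards [Ioc_mem_nhdsGT hr] with x hx t ht hty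
    rw [uIcc_of_le hx.1.le] at ht
    exact hP ⟨ht.1.lt_of_ne' hty, ht.2.trans hx.2⟩

/-- Replacing the test function `φ` by `χ k * φ` amounts, in the limit, to replacing `f` by
`1_C f` in the integral over the segment between `p` and `q`. -/
def CutoffLimitOn (f : ℝ → ℝ) (χ : ℕ → ℝ → ℝ) (φ : ℝ → ℝ) (C : Set ℝ) (p q : ℝ) : Prop :=
  Tendsto (fun k => ∫ y in p..q, f y * deriv (fun y => χ k y * φ y) y) atTop
    (𝓝 (∫ y in p..q, C.indicator f y * deriv φ y))

variable {f φ : ℝ → ℝ} {χ : ℕ → ℝ → ℝ} {C G : Set ℝ} {V p q : ℝ}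

theorem CutoffLimitOn.symm (h : CutoffLimitOn f χ φ C p q) : CutoffLimitOn f χ φ C q p := by
  unfold CutoffLimitOn
  simp_rw [intervalIntegral.integral_symm p q]
  exact Tendsto.neg h

theorem CutoffLimitOn.trans (hf : Integrable f) (hχ : IsCutoffSeq χ C) (hC : IsClosed C)
    (hφ : ContDiff ℝ 1 φ) (hφs : HasCompactSupport φ) {r : ℝ} (hpq : CutoffLimitOn f χ φ C p q)
    (hqr : CutoffLimitOn f χ φ C q r) : CutoffLimitOn f χ φ C p r := by
  unfold CutoffLimitOn
  have hadd : ∀ {F : ℝ → ℝ}, Integrable F → ∫ y in p..r, F y =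
      (∫ y in p..q, F y) + ∫ y in q..r, F y := fun hF =>
    (intervalIntegral.integral_add_adjacent_intervals hF.intervalIntegrable
      hF.intervalIntegrable).symm
  simp_rw [hadd (integrable_mul_deriv (hf.indicator hC.measurableSet) hφ hφs),
    hadd (integrable_mul_deriv hf ((hχ.contDiff _).mul hφ) hφs.mul_left)]
  exact Tendsto.add hpq hqr

theorem cutoffLimitOn_of_subset (hχ : IsCutoffSeq χ C) (h : ∀ t ∈ uIoo p q, t ∈ C) :
    CutoffLimitOn f χ φ C p q := by
  refine tendsto_const_nhds.congr fun k => intervalIntegral.integral_congr_uIoo fun t ht => ?_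
  have heq : (fun y => χ k y * φ y) =ᶠ[𝓝 t] φ := by
    filter_upwards [isOpen_Ioo.mem_nhds ht] with y hy
    rw [hχ.eq_one k y (h y hy), one_mul]
  simp only [heq.deriv_eq, indicator_of_mem (h t ht)]

theorem cutoffLimitOn_of_ae_eq_zero (h : ∀ᵐ t, t ∈ uIoc p q → f t = 0) :
    CutoffLimitOn f χ φ C p q := by
  refine tendsto_const_nhds.congr fun k => intervalIntegral.integral_congr_ae ?_
  filter_upwards [h] with t ht htpq
  simp [ht htpq, indicator_apply_eq_zero]

theorem SegVariationLE.cutoffLimitOn_of_le (hV : SegVariationLE f V) (hχ : IsCutoffSeq χ C)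
    (hφ : ContDiff ℝ 1 φ) (hpq : p ≤ q) (hCφ : ∀ t ∈ Icc p q, t ∉ C ∨ φ t = 0)
    (hC : ∀ t ∈ Ioo p q, t ∉ C) : CutoffLimitOn f χ φ C p q := by
  have hlim : ∫ t in p..q, C.indicator f t * deriv φ t = 0 := by
    rw [← intervalIntegral.integral_zero (a := p) (b := q) (μ := volume)]
    refine intervalIntegral.integral_congr_uIoo fun t ht => ?_
    simp only [indicator_of_notMem (hC t (uIoo_of_le hpq ▸ ht)), zero_mul]
  rw [CutoffLimitOn, hlim, Metric.tendsto_nhds]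
  intro ε hε
  have hεV : 0 < ε / (|V| + 1) := by positivity
  filter_upwards [hχ.eventually_mul_eq_zero (hCφ p ⟨le_rfl, hpq⟩),
    hχ.eventually_mul_eq_zero (hCφ q ⟨hpq, le_rfl⟩),
    hχ.eventually_forall_abs_mul_lt hφ.continuous isCompact_Icc hCφ hεV] with k hkp hkq hk
  rw [dist_zero_right, Real.norm_eq_abs]
  calc _ ≤ V * (ε / (|V| + 1)) :=
        hV hpq ((hχ.contDiff k).mul hφ) hkp hkq fun y hy => (hk y hy).le
    _ < (|V| + 1) * (ε / (|V| + 1)) :=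
        mul_lt_mul_of_pos_right ((le_abs_self V).trans_lt (lt_add_one _)) hεV
    _ = ε := mul_div_cancel₀ ε (by positivity)

theorem SegVariationLE.eventually_cutoffLimitOn (hV : SegVariationLE f V) (hχ : IsCutoffSeq χ C)
    (hφ : ContDiff ℝ 1 φ) (hf0 : ∀ᵐ t, t ∈ G → f t = 0) {y : ℝ} {S : Set ℝ}
    (hS : S = Iio y ∨ S = Ioi y)
    (hside : (∀ᶠ t in 𝓝[S] y, t ∈ C) ∨ (∀ᶠ t in 𝓝[S] y, t ∈ G) ∨
      ((∀ᶠ t in 𝓝[S] y, t ∉ C) ∧ (y ∉ C ∨ φ y = 0))) :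
    ∀ᶠ x in 𝓝[S] y, CutoffLimitOn f χ φ C y x := by
  rcases hside with h | h | ⟨h, hy⟩ <;>
    refine (eventually_nhdsWithin_forall_uIcc hS h).mono fun x hx => ?_
  · exact cutoffLimitOn_of_subset hχ fun t ht => hx t (uIoo_subset_uIcc_self ht)
      (ne_of_mem_of_not_mem ht left_notMem_uIoo)
  · refine cutoffLimitOn_of_ae_eq_zero ?_
    filter_upwards [hf0, compl_mem_ae_iff.2 (measure_singleton y)] with t ht hty htx
    exact ht (hx t (uIoc_subset_uIcc htx) hty)
  · have hCφ : ∀ t ∈ uIcc y x, t ∉ C ∨ φ t = 0 := fun t ht => by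
      rcases eq_or_ne t y with rfl | hne
      exacts [hy, .inl (hx t ht hne)]
    rcases le_total y x with hle | hle
    · exact hV.cutoffLimitOn_of_le hχ hφ hle (uIcc_of_le hle ▸ hCφ) fun t ht =>
        hx t (uIcc_of_le hle ▸ Ioo_subset_Icc_self ht) ht.1.ne'
    · exact (hV.cutoffLimitOn_of_le hχ hφ hle (uIcc_of_ge hle ▸ hCφ) fun t ht =>
        hx t (uIcc_of_ge hle ▸ Ioo_subset_Icc_self ht) ht.2.ne).symm

theorem SegVariationLE.tendsto_integral_mul_deriv_cutoff (hV : SegVariationLE f V)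
    (hf : Integrable f) (hχ : IsCutoffSeq χ C) (hC : IsClosed C) (hφ : ContDiff ℝ 1 φ)
    (hφs : HasCompactSupport φ) (hf0 : ∀ᵐ t, t ∈ G → f t = 0)
    (hside : ∀ y S, S = Iio y ∨ S = Ioi y → (∀ᶠ t in 𝓝[S] y, t ∈ C) ∨ (∀ᶠ t in 𝓝[S] y, t ∈ G) ∨
      ((∀ᶠ t in 𝓝[S] y, t ∉ C) ∧ (y ∉ C ∨ φ y = 0))) :
    Tendsto (fun k => ∫ y, f y * deriv (fun y => χ k y * φ y) y) atTop
      (𝓝 (∫ y, C.indicator f y * deriv φ y)) := by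
  obtain ⟨p, q, -, -, heq⟩ := exists_integral_mul_deriv_eq_intervalIntegral hφs
  rw [heq _ φ Subset.rfl]
  simp_rw [heq f _ (tsupport_mul_subset_right)]
  suffices hall : ∀ p q, CutoffLimitOn f χ φ C p q from hall p q
  refine PreconnectedSpace.induction₂' _ (fun y => ?_)
    ⟨fun _ _ _ => CutoffLimitOn.trans hf hχ hC hφ hφs⟩
  have hpunctured : ∀ᶠ x in 𝓝[≠] y, CutoffLimitOn f χ φ C y x := by
    rw [← Iio_union_Ioi, nhdsWithin_union, eventually_sup]
    exact ⟨hV.eventually_cutoffLimitOn hχ hφ hf0 (.inl rfl) (hside y _ (.inl rfl)),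
      hV.eventually_cutoffLimitOn hχ hφ hf0 (.inr rfl) (hside y _ (.inr rfl))⟩
  filter_upwards [eventually_nhdsWithin_iff.1 hpunctured] with x hx
  rcases eq_or_ne x y with rfl | hne
  · exact ⟨cutoffLimitOn_of_subset hχ (by simp),
      cutoffLimitOn_of_subset hχ (by simp)⟩
  · exact ⟨hx hne, (hx hne).symm⟩

end CutoffLimit

section RegionBetween

variable {X : Type*} [TopologicalSpace X] {F l U P : Set X}

/-- `U` is an open region outside the closed set `F`, enclosed between `F` and `l`. -/
structure IsRegionBetween (F l U : Set X) : Prop where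
  isClosed : IsClosed F
  isOpen : IsOpen U
  disjoint : Disjoint U F
  frontier_subset : frontier U ⊆ frontier F ∪ l

theorem IsRegionBetween.subset_or_subset_or_subset (h : IsRegionBetween F l U)
    (hP : IsPreconnected P) (hdisj : Disjoint P (frontier F ∪ l)) :
    P ⊆ U ∨ P ⊆ interior F ∨ P ⊆ (F ∪ closure U)ᶜ := by
  have hF := subset_interior_or_subset_compl_closure_of_isPreconnected hP
    (hdisj.mono_right subset_union_left)
  have hU := subset_interior_or_subset_compl_closure_of_isPreconnected hP
    (hdisj.mono_right h.frontier_subset)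
  rw [h.isClosed.closure_eq] at hF
  rw [h.isOpen.interior_eq] at hU
  rcases hU with hU | hU
  · exact .inl hU
  rcases hF with hF | hF
  · exact .inr (.inl hF)
  · exact .inr (.inr (compl_union F _ ▸ subset_inter hF hU))

theorem exists_isPreconnected_mem_nhdsWithin {y : ℝ} {S A : Set ℝ} (hS : S = Iio y ∨ S = Ioi y)
    (hA : A ∈ 𝓝[S] y) : ∃ I ∈ 𝓝[S] y, I ⊆ A ∧ IsPreconnected I := by
  rcases hS with rfl | rfl
  · obtain ⟨p, hp, hpA⟩ := mem_nhdsLT_iff_exists_Ioo_subset.1 hA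
    exact ⟨Ioo p y, Ioo_mem_nhdsLT hp, hpA, isPreconnected_Ioo⟩
  · obtain ⟨q, hq, hqA⟩ := mem_nhdsGT_iff_exists_Ioo_subset.1 hA
    exact ⟨Ioo y q, Ioo_mem_nhdsGT hq, hqA, isPreconnected_Ioo⟩

theorem exists_opposite_side {y : ℝ} {S : Set ℝ} (hS : S = Iio y ∨ S = Ioi y) :
    ∃ S', (S' = Iio y ∨ S' = Ioi y) ∧ 𝓝[≠] y = 𝓝[S] y ⊔ 𝓝[S'] y := by
  rw [← Iio_union_Ioi, nhdsWithin_union]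
  rcases hS with rfl | rfl
  exacts [⟨Ioi y, .inr rfl, rfl⟩, ⟨Iio y, .inl rfl, sup_comm _ _⟩]

variable {c : ℝ → X} {y : ℝ} {S : Set ℝ}

theorem IsRegionBetween.eventually_side (h : IsRegionBetween F l U) (hc : Continuous c)
    (hfin : (c ⁻¹' (frontier F ∪ l)).Finite) (hS : S = Iio y ∨ S = Ioi y) :
    (∀ᶠ t in 𝓝[S] y, c t ∈ U) ∨ (∀ᶠ t in 𝓝[S] y, c t ∈ interior F) ∨
      (∀ᶠ t in 𝓝[S] y, c t ∈ (F ∪ closure U)ᶜ) := by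
  have hyS : y ∉ S := by rcases hS with rfl | rfl <;> simp
  have havoid : (c ⁻¹' (frontier F ∪ l))ᶜ ∈ 𝓝[S] y :=
    (nhdsWithin_mono y (subset_compl_singleton_iff.2 hyS)).trans (nhdsNE_le_cofinite y)
      hfin.compl_mem_cofinite
  obtain ⟨I, hI, hIA, hIpre⟩ := exists_isPreconnected_mem_nhdsWithin hS havoid
  have hcI : Disjoint (c '' I) (frontier F ∪ l) :=
    disjoint_image_left.2 (subset_compl_iff_disjoint_right.1 hIA)
  have hside := h.subset_or_subset_or_subset (hIpre.image c hc.continuousOn) hcI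
  simp only [image_subset_iff] at hside
  exact hside.imp (mem_of_superset hI) (Or.imp (mem_of_superset hI) (mem_of_superset hI))

theorem IsRegionBetween.eventually_side_of_preperfect (h : IsRegionBetween F l U)
    (hc : Continuous c) (hfin : (c ⁻¹' (frontier F ∪ l)).Finite) (hF : Preperfect (c ⁻¹' F))
    (hU : Preperfect (c ⁻¹' closure U)) (hS : S = Iio y ∨ S = Ioi y) :
    (∀ᶠ t in 𝓝[S] y, c t ∈ closure U) ∨ (∀ᶠ t in 𝓝[S] y, c t ∈ F) ∨
      ((∀ᶠ t in 𝓝[S] y, c t ∉ closure U) ∧ (c y ∉ closure U ∨ c y ∈ l)) := by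
  rcases h.eventually_side hc hfin hS with hev | hev | hev
  · exact .inl (hev.mono fun t ht => subset_closure ht)
  · exact .inr (.inl (hev.mono fun t ht => interior_subset ht))
  refine .inr (.inr ⟨hev.mono fun t ht h' => ht (.inr h'), ?_⟩)
  by_contra! hy
  obtain ⟨hyU, hyl⟩ := hy
  obtain ⟨S', hS', hsup⟩ := exists_opposite_side hS
  have : (𝓝[S] y).NeBot := by rcases hS with rfl | rfl <;> infer_instance
  have hyU' : c y ∉ U := fun hmem => by
    have hU : ∀ᶠ t in 𝓝[S] y, c t ∈ U :=
      nhdsWithin_le_nhds (hc.continuousAt.preimage_mem_nhds (h.isOpen.mem_nhds hmem))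
    obtain ⟨t, htU, ht⟩ := (hU.and hev).exists
    exact ht (.inr (subset_closure htU))
  have hyF : c y ∈ F := by
    rcases h.frontier_subset ⟨hyU, by rwa [h.isOpen.interior_eq]⟩ with hyF | hyl'
    exacts [h.isClosed.frontier_subset hyF, (hyl hyl').elim]
  have hfreq : ∀ {A : Set X}, A ⊆ F ∪ closure U → Preperfect (c ⁻¹' A) → c y ∈ A →
      ∃ᶠ t in 𝓝[S'] y, c t ∈ A := fun {A} hA hpre hyA => by
    have hne := accPt_iff_frequently_nhdsNE.1 (hpre y hyA)
    rw [hsup, frequently_sup] at hne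
    exact hne.resolve_left fun hS => hS (hev.mono fun t ht htA => ht (hA htA))
  have hfreqF := hfreq subset_union_left hF hyF
  have hfreqU := hfreq subset_union_right hU hyU
  rcases h.eventually_side hc hfin hS' with hev' | hev' | hev'
  · exact hfreqF (hev'.mono fun t ht htF => h.disjoint.le_bot ⟨ht, htF⟩)
  · have hdisj : Disjoint (closure U) (interior F) :=
      (h.disjoint.mono_right interior_subset).closure_left isOpen_interior
    exact hfreqU (hev'.mono fun t ht htU => hdisj.le_bot ⟨htU, ht⟩)
  · exact hfreqF (hev'.mono fun t ht htF => ht (.inl htF))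

end RegionBetween

section DirectionalLimit

variable {X : Type*} [NormedAddCommGroup X] [NormedSpace ℝ X]

theorem isClosedEmbedding_prodMk (e : (ℝ × ℝ) ≃L[ℝ] X) (s : ℝ) :
    Topology.IsClosedEmbedding fun y => e (s, y) :=
  e.toHomeomorph.isClosedEmbedding.comp (.of_continuous_injective_isClosedMap (by fun_prop)
    (Prod.mk_right_injective s) (isClosedMap_prodMk_left s))

variable [MeasureSpace X] [BorelSpace X]

theorem integrable_mul_fderiv {f η : X → ℝ} (hf : Integrable f) (hη : ContDiff ℝ 1 η)
    (hηs : HasCompactSupport η) (w : X) : Integrable fun x => f x * fderiv ℝ η x w := by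
  have hη' : Continuous fun x => fderiv ℝ η x w :=
    (hη.continuous_fderiv one_ne_zero).clm_apply continuous_const
  obtain ⟨D, hD⟩ := (hηs.fderiv_apply ℝ w).exists_bound_of_continuous hη'
  exact hf.mul_bdd hη'.aestronglyMeasurable (Eventually.of_forall hD)

variable {e : (ℝ × ℝ) ≃L[ℝ] X} {f η : X → ℝ}

theorem integrable_prodMk_mul_deriv (he : MeasurePreserving e) (hf : Integrable f)
    (hη : ContDiff ℝ 1 η) (hηs : HasCompactSupport η) :
    Integrable fun z : ℝ × ℝ => f (e z) * deriv (fun y => η (e (z.1, y))) z.2 := by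
  simp_rw [deriv_comp_prodMk e (hη.differentiable one_ne_zero)]
  exact he.integrable_comp_of_integrable (integrable_mul_fderiv hf hη hηs (e (0, 1)))

theorem integral_mul_fderiv_eq_integral_slices (he : MeasurePreserving e) (hf : Integrable f)
    (hη : ContDiff ℝ 1 η) (hηs : HasCompactSupport η) :
    ∫ x, f x * fderiv ℝ η x (e (0, 1)) =
      ∫ s, ∫ y, f (e (s, y)) * deriv (fun y => η (e (s, y))) y := by
  rw [← he.integral_comp e.toHomeomorph.measurableEmbedding]
  have hint := integrable_prodMk_mul_deriv he hf hη hηs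
  rw [← integral_prod _ hint]
  simp_rw [deriv_comp_prodMk e (hη.differentiable one_ne_zero)]
  rfl

variable [FiniteDimensional ℝ X] [(volume : Measure X).IsAddHaarMeasure] {F l U : Set X}
  {ψ φ : X → ℝ} {M : ℝ} {χ : ℕ → X → ℝ}

theorem IsRegionBetween.tendsto_integral_mul_fderiv_cutoff_of_univ (h : IsRegionBetween F l U)
    (he : MeasurePreserving e) (hfin : ∀ᵐ s, (slice e s (frontier F ∪ l)).Finite)
    (hF : ∀ᵐ s, Preperfect (slice e s F)) (hU : ∀ᵐ s, Preperfect (slice e s (closure U)))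
    (hψ : Integrable ψ) (hM : DirVariationLE univ ψ (e (0, 1)) M) (hψ0 : ∀ᵐ x, x ∈ F → ψ x = 0)
    (hχ : IsCutoffSeq χ (closure U)) (hφ : ContDiff ℝ 1 φ) (hφs : HasCompactSupport φ)
    (hφl : ∀ᵐ s, ∀ y ∈ slice e s (closure U ∩ l), φ (e (s, y)) = 0) :
    Tendsto (fun k => ∫ x, ψ x * fderiv ℝ (fun x => χ k x * φ x) x (e (0, 1))) atTop
      (𝓝 (∫ x, (closure U).indicator ψ x * fderiv ℝ φ x (e (0, 1)))) := by
  obtain ⟨V, hV, hVs⟩ := hM.exists_ae_segVariationLE hψ he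
  obtain ⟨m, hm⟩ := hφs.exists_bound_of_continuous hφ.continuous
  have hχφ : ∀ k, ContDiff ℝ 1 fun x => χ k x * φ x := fun k => (hχ.contDiff k).mul hφ
  have hslice : ∀ {u : X → ℝ} (s), HasCompactSupport u → HasCompactSupport fun y => u (e (s, y)) :=
    fun s hu => hu.comp_isClosedEmbedding (isClosedEmbedding_prodMk e s)
  have hψe := he.integrable_comp_of_integrable hψ
  rw [integral_mul_fderiv_eq_integral_slices he (hψ.indicator isClosed_closure.measurableSet)
    hφ hφs]
  simp_rw [fun k => integral_mul_fderiv_eq_integral_slices he hψ (hχφ k) hφs.mul_left]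
  refine tendsto_integral_of_dominated_convergence (fun s => V s * m) (fun k => ?_)
    (hV.mul_const m) (fun k => ?_) ?_
  · exact (integrable_prodMk_mul_deriv he hψ (hχφ k) hφs.mul_left).integral_prod_left
      |>.aestronglyMeasurable
  · filter_upwards [hVs] with s hs
    exact hs.abs_integral_mul_deriv_le ((hχφ k).comp (by fun_prop)) (hslice s hφs.mul_left)
      fun y => (hχ.abs_mul_le k _ _).trans (hm _)
  · filter_upwards [hVs, hfin, hF, hU, hφl, hψe.prod_right_ae, ae_ae_prodMk he hψ0]
      with s hs hfins hFs hUs hφs' hψs hψ0s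
    refine hs.tendsto_integral_mul_deriv_cutoff (C := slice e s (closure U)) (G := slice e s F)
      hψs (hχ.comp (by fun_prop)) (isClosed_closure.preimage (by fun_prop))
      (hφ.comp (by fun_prop)) (hslice s hφs) hψ0s fun y S hS => ?_
    refine (h.eventually_side_of_preperfect (by fun_prop) hfins hFs hUs hS).imp_right
      (Or.imp_right (And.imp_right fun hyl => ?_))
    by_cases hyU : e (s, y) ∈ closure U
    exacts [.inr (hφs' y ⟨hyU, hyl.resolve_left (not_not_intro hyU)⟩), .inl hyU]

end DirectionalLimit

section Localization

variable {X : Type*} [NormedAddCommGroup X] [NormedSpace ℝ X]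

theorem exists_contDiff_eventually_eq_one_of_isCompact [FiniteDimensional ℝ X]
    {K B : Set X} (hK : IsCompact K) (hB : IsOpen B) (hKB : K ⊆ B) :
    ∃ κ : X → ℝ, ContDiff ℝ 1 κ ∧ HasCompactSupport κ ∧ tsupport κ ⊆ B ∧
      (∀ᶠ x in 𝓝ˢ K, κ x = 1) ∧ ∀ x, κ x ∈ Icc (0 : ℝ) 1 := by
  obtain ⟨L, hL, hKL, hLB⟩ := exists_compact_between hK hB hKB
  obtain ⟨κ, hκ1, hκ0, hκ01⟩ := exists_contMDiffMap_one_nhds_of_subset_interior (n := 1)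
    (modelWithCornersSelf ℝ X) hK.isClosed hKL
  have hsupp : tsupport κ ⊆ L :=
    closure_minimal (fun x hx => by_contra fun hxL => hx (hκ0 x hxL)) hL.isClosed
  exact ⟨κ, κ.contMDiff.contDiff, hL.of_isClosed_subset (isClosed_tsupport _) hsupp,
    hsupp.trans hLB, hκ1, hκ01⟩

variable [MeasureSpace X] [BorelSpace X] {B : Set X} {ψ κ φ : X → ℝ} {w : X} {M : ℝ}

theorem DirVariationLE.exists_mul_left (hM : DirVariationLE B ψ w M) (hψ : Integrable ψ)
    (hκ : ContDiff ℝ 1 κ) (hκs : HasCompactSupport κ) (hκB : tsupport κ ⊆ B)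
    (hκ01 : ∀ x, κ x ∈ Icc (0 : ℝ) 1) :
    ∃ M', DirVariationLE univ (fun x => κ x * ψ x) w M' := by
  have hψκ := integrable_mul_fderiv hψ hκ hκs w
  refine ⟨M + ∫ x, |ψ x * fderiv ℝ κ x w|, fun θ hθ _ _ hθ1 => ?_⟩
  have hprod : ∀ x, κ x * ψ x * fderiv ℝ θ x w =
      ψ x * fderiv ℝ (fun x => κ x * θ x) x w - ψ x * fderiv ℝ κ x w * θ x := fun x => by
    rw [fderiv_fun_mul (hκ.differentiable one_ne_zero x) (hθ.differentiable one_ne_zero x)]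
    simp only [add_apply, smul_apply, smul_eq_mul]
    ring
  have hint := integrable_mul_fderiv hψ (hκ.mul hθ) hκs.mul_right w
  have hint' : Integrable fun x => ψ x * fderiv ℝ κ x w * θ x :=
    hψκ.mul_bdd hθ.continuous.aestronglyMeasurable (Eventually.of_forall hθ1)
  calc ∫ x, κ x * ψ x * fderiv ℝ θ x w
      = (∫ x, ψ x * fderiv ℝ (fun x => κ x * θ x) x w) - ∫ x, ψ x * fderiv ℝ κ x w * θ x := by
        simp_rw [hprod]
        exact integral_sub hint hint'
    _ ≤ M + ∫ x, |ψ x * fderiv ℝ κ x w| := by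
        rw [sub_eq_add_neg, ← integral_neg]
        refine add_le_add (hM _ (hκ.mul hθ) hκs.mul_right
          (tsupport_mul_subset_left.trans hκB) fun x => ?_)
          (integral_mono hint'.neg hψκ.abs fun x => ?_)
        · rw [abs_mul, abs_of_nonneg (hκ01 x).1]
          exact mul_le_one₀ (hκ01 x).2 (abs_nonneg _) (hθ1 x)
        · refine (neg_le_abs _).trans ?_
          rw [abs_mul]
          exact mul_le_of_le_one_right (abs_nonneg _) (hθ1 x)

variable [FiniteDimensional ℝ X] [(volume : Measure X).IsAddHaarMeasure] {F l U : Set X}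
  {e : (ℝ × ℝ) ≃L[ℝ] X} {χ : ℕ → X → ℝ}

theorem IsRegionBetween.tendsto_integral_mul_fderiv_cutoff (h : IsRegionBetween F l U)
    (he : MeasurePreserving e) (hfin : ∀ᵐ s, (slice e s (frontier F ∪ l)).Finite)
    (hF : ∀ᵐ s, Preperfect (slice e s F)) (hU : ∀ᵐ s, Preperfect (slice e s (closure U)))
    (hB : IsOpen B) (hψ : Integrable ψ) (hM : DirVariationLE B ψ (e (0, 1)) M)
    (hψ0 : ∀ᵐ x, x ∈ F → ψ x = 0) (hχ : IsCutoffSeq χ (closure U)) (hφ : ContDiff ℝ 1 φ)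
    (hφs : HasCompactSupport φ) (hφB : tsupport φ ⊆ B)
    (hφl : ∀ᵐ s, ∀ y ∈ slice e s (closure U ∩ l), φ (e (s, y)) = 0) :
    Tendsto (fun k => ∫ x, ψ x * fderiv ℝ (fun x => χ k x * φ x) x (e (0, 1))) atTop
      (𝓝 (∫ x, (closure U).indicator ψ x * fderiv ℝ φ x (e (0, 1)))) := by
  obtain ⟨κ, hκ, hκs, hκB, hκ1, hκ01⟩ :=
    exists_contDiff_eventually_eq_one_of_isCompact hφs.isCompact hB hφB
  obtain ⟨M', hM'⟩ := hM.exists_mul_left hψ hκ hκs hκB hκ01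
  have hκ_mul : ∀ η : X → ℝ, tsupport η ⊆ tsupport φ → ∀ x,
      κ x * ψ x * fderiv ℝ η x (e (0, 1)) = ψ x * fderiv ℝ η x (e (0, 1)) := fun η hη x => by
    by_cases hx : x ∈ tsupport η
    · rw [hκ1.self_of_nhdsSet x (hη hx), one_mul]
    · rw [fderiv_of_notMem_tsupport _ hx, zero_apply, mul_zero, mul_zero]
  have hκψ : Integrable fun x => κ x * ψ x := hψ.bdd_mul hκ.continuous.aestronglyMeasurable
    (Eventually.of_forall fun x => (abs_of_nonneg (hκ01 x).1).trans_le (hκ01 x).2)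
  have hlim := h.tendsto_integral_mul_fderiv_cutoff_of_univ he hfin hF hU hκψ hM'
    (hψ0.mono fun x hx hxF => by rw [hx hxF, mul_zero]) hχ hφ hφs hφl
  have hκ_indicator : ∀ x,
      (closure U).indicator (fun x => κ x * ψ x) x * fderiv ℝ φ x (e (0, 1)) =
        (closure U).indicator ψ x * fderiv ℝ φ x (e (0, 1)) := fun x => by
    by_cases hx : x ∈ closure U
    · simp only [indicator_of_mem hx, hκ_mul φ Subset.rfl x]
    · simp only [indicator_of_notMem hx]
  simpa only [hκ_mul _ tsupport_mul_subset_right, hκ_indicator] using hlim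

end Localization

section LevelSets

variable {X : Type*} [NormedAddCommGroup X] [NormedSpace ℝ X] {f : X →L[ℝ] ℝ}

theorem apply_equiv_prodMk (f : X →L[ℝ] ℝ) (e : (ℝ × ℝ) ≃L[ℝ] X) (s y : ℝ) :
    f (e (s, y)) = s * f (e (1, 0)) + y * f (e (0, 1)) := by
  have hsum : (s, y) = s • ((1, 0) : ℝ × ℝ) + y • ((0, 1) : ℝ × ℝ) := by simp
  rw [hsum, map_add, map_add, map_smul, map_smul, map_smul, map_smul, smul_eq_mul, smul_eq_mul]

theorem ae_slice_level_eq_empty (hf : f ≠ 0) {e : (ℝ × ℝ) ≃L[ℝ] X} (he : f (e (0, 1)) = 0)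
    (t : ℝ) : ∀ᵐ s, slice e s {x | f x = t} = ∅ := by
  have h10 : f (e (1, 0)) ≠ 0 := fun h10 => hf <| by
    ext x
    rw [← e.apply_symm_apply x, ← Prod.mk.eta (p := e.symm x), apply_equiv_prodMk, h10, he]
    simp
  filter_upwards [Measure.ae_ne volume (t / f (e (1, 0)))] with s hs
  refine eq_empty_of_forall_notMem fun y hy => hs ?_
  rw [eq_div_iff h10]
  simpa [mem_slice, apply_equiv_prodMk f e s y, he] using hy

theorem ae_finite_slice_level (hf : f ≠ 0) (e : (ℝ × ℝ) ≃L[ℝ] X) (t : ℝ) :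
    ∀ᵐ s, (slice e s {x | f x = t}).Finite := by
  by_cases he : f (e (0, 1)) = 0
  · exact (ae_slice_level_eq_empty hf he t).mono fun s hs => hs ▸ finite_empty
  refine Eventually.of_forall fun s => Set.Subsingleton.finite fun y hy z hz => ?_
  rw [mem_slice, mem_ofPred_eq, apply_equiv_prodMk] at hy hz
  exact mul_right_cancel₀ he (add_left_cancel (hy.trans hz.symm))

theorem exists_measurePreserving_apply_zero_one (v : OrthonormalBasis (Fin 2) ℝ E2) (i : Fin 2) :
    ∃ e : (ℝ × ℝ) ≃L[ℝ] E2, MeasurePreserving e ∧ e (0, 1) = v i := by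
  let w := v.reindex (Equiv.swap i 1)
  let J := Complex.isometryOfOrthonormal w
  refine ⟨Complex.equivRealProdCLM.symm.trans J.toContinuousLinearEquiv,
    J.measurePreserving.comp (Complex.volume_preserving_equiv_real_prod.symm _), ?_⟩
  calc J ⟨0, 1⟩ = w 1 := by simp [J, Complex.isometryOfOrthonormal_apply]
    _ = v i := by simp [w]

end LevelSets

section StraightSide

variable {S U B : Set E2} {f : E2 →L[ℝ] ℝ} {t : ℝ}

theorem IsRegionBetween.volume_frontier_eq_zero
    (h : IsRegionBetween (closure S) {x | f x = t} U) (hS : PiecewiseLipschitz S) (hf : f ≠ 0) :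
    volume (frontier U) = 0 := by
  obtain ⟨e, he, -⟩ :=
    exists_measurePreserving_apply_zero_one (EuclideanSpace.basisFun (Fin 2) ℝ) 0
  refine volume_eq_zero_of_ae_finite_slice he isClosed_frontier ?_
  filter_upwards [hS.ae_finite_slice_frontier_closure e, ae_finite_slice_level hf e t] with s hF hl
  exact (hF.union hl).subset (preimage_mono h.frontier_subset)

variable {ψ φ : E2 → ℝ} {M : ℝ} {χ : ℕ → E2 → ℝ} {v : OrthonormalBasis (Fin 2) ℝ E2} {i : Fin 2}

theorem IsRegionBetween.tendsto_integral_mul_fderiv_cutoff_of_level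
    (h : IsRegionBetween (closure S) {x | f x = t} U) (hS : PiecewiseLipschitz S) (hf : f ≠ 0)
    (hU : UncutByConvex U) (hB : IsOpen B) (hψ : Integrable ψ) (hM : DirVariationLE B ψ (v i) M)
    (hψ0 : ∀ᵐ x, x ∈ closure S → ψ x = 0) (hχ : IsCutoffSeq χ (closure U)) (hφ : ContDiff ℝ 1 φ)
    (hφs : HasCompactSupport φ) (hφB : tsupport φ ⊆ B)
    (hφl : f (v i) = 0 ∨ ∀ x ∈ closure U, f x = t → φ x = 0) :
    Tendsto (fun k => ∫ x, ψ x * fderiv ℝ (fun x => χ k x * φ x) x (v i)) atTop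
      (𝓝 (∫ x, (closure U).indicator ψ x * fderiv ℝ φ x (v i))) := by
  obtain ⟨e, he, hev⟩ := exists_measurePreserving_apply_zero_one v i
  rw [← hev] at hM hφl ⊢
  refine h.tendsto_integral_mul_fderiv_cutoff he ?_ (hS.ae_preperfect_slice_closure e)
    (hU.ae_preperfect_slice_closure h.isOpen e) hB hψ hM hψ0 hχ hφ hφs hφB ?_
  · filter_upwards [hS.ae_finite_slice_frontier_closure e, ae_finite_slice_level hf e t]
      with s hF hl using hF.union hl
  · rcases hφl with hfe | hφl
    · filter_upwards [ae_slice_level_eq_empty hf hfe t] with s hs y hy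
      exact (hs.subset hy.2).elim
    · exact Eventually.of_forall fun s y hy => hφl _ hy.1 hy.2

end StraightSide

section Divergence

variable {f g : E2 → E2} {ψ : E2 → ℝ} {x : E2}

theorem diver_add (hf : DifferentiableAt ℝ f x) (hg : DifferentiableAt ℝ g x) :
    diver (fun y => f y + g y) x = diver f x + diver g x := by
  rw [diver, fderiv_fun_add hf hg, ContinuousLinearMap.toLinearMap_add, map_add, diver, diver]

theorem diver_sub (hf : DifferentiableAt ℝ f x) (hg : DifferentiableAt ℝ g x) :
    diver (fun y => f y - g y) x = diver f x - diver g x := by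
  rw [diver, fderiv_fun_sub hf hg, ContinuousLinearMap.toLinearMap_sub, map_sub, diver, diver]

theorem diver_eq_sum (v : OrthonormalBasis (Fin 2) ℝ E2) (hg : DifferentiableAt ℝ g x) :
    diver g x = ∑ i, fderiv ℝ (fun y => inner ℝ (v i) (g y)) x (v i) := by
  rw [diver, LinearMap.trace_eq_sum_inner _ v]
  refine Finset.sum_congr rfl fun i _ => ?_
  have hcomp := ((innerSL ℝ (v i)).hasFDerivAt (x := g x)).comp x hg.hasFDerivAt
  exact (DFunLike.congr_fun hcomp.fderiv (v i)).symm

theorem diver_smul_basis {θ : E2 → ℝ} (v : OrthonormalBasis (Fin 2) ℝ E2) (i : Fin 2)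
    (hθ : DifferentiableAt ℝ θ x) : diver (fun y => θ y • v i) x = fderiv ℝ θ x (v i) := by
  rw [diver_eq_sum v (hθ.smul_const (v i)), Finset.sum_eq_single i]
  · simp [inner_smul_right]
  · intro j _ hj
    simp [inner_smul_right, v.inner_eq_zero hj]
  · simp

theorem diver_of_notMem_tsupport (hx : x ∉ tsupport g) : diver g x = 0 := by
  rw [diver, fderiv_of_notMem_tsupport ℝ hx, ContinuousLinearMap.toLinearMap_zero, map_zero]

theorem continuous_diver (hg : ContDiff ℝ 1 g) : Continuous (diver g) :=
  ((LinearMap.trace ℝ E2).comp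
    (ContinuousLinearMap.coeLM ℝ)).continuous_of_finiteDimensional.comp
    (hg.continuous_fderiv one_ne_zero)

theorem integrable_mul_diver (hψ : Integrable ψ) (hg : ContDiff ℝ 1 g)
    (hgs : HasCompactSupport g) : Integrable fun x => ψ x * diver g x := by
  obtain ⟨D, hD⟩ := (HasCompactSupport.intro hgs fun _ hx =>
    diver_of_notMem_tsupport hx).exists_bound_of_continuous (continuous_diver hg)
  exact hψ.mul_bdd (continuous_diver hg).aestronglyMeasurable (Eventually.of_forall hD)

end Divergence

section VectorLimit

variable {S U B : Set E2} {t : ℝ} {ψ : E2 → ℝ} {M : ℝ} {χ : ℕ → E2 → ℝ} {Φ : E2 → E2}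
  {v : OrthonormalBasis (Fin 2) ℝ E2}

theorem IsRegionBetween.tendsto_integral_mul_diver_cutoff
    (h : IsRegionBetween (closure S) {x | inner ℝ (v 1) x = t} U) (hS : PiecewiseLipschitz S)
    (hU : UncutByConvex U) (hB : IsOpen B) (hψ : Integrable ψ)
    (hM : ∀ i, DirVariationLE B ψ (v i) M) (hψ0 : ∀ᵐ x, x ∈ closure S → ψ x = 0)
    (hχ : IsCutoffSeq χ (closure U)) (hΦ : ContDiff ℝ 1 Φ) (hΦs : HasCompactSupport Φ)
    (hΦB : tsupport Φ ⊆ B)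
    (hΦl : ∀ x ∈ closure U, inner ℝ (v 1) x = t → inner ℝ (v 1) (Φ x) = 0) :
    Tendsto (fun k => ∫ x, ψ x * diver (fun x => χ k x • Φ x) x) atTop
      (𝓝 (∫ x, (closure U).indicator ψ x * diver Φ x)) := by
  have hφ : ∀ i, ContDiff ℝ 1 fun x => inner ℝ (v i) (Φ x) := fun i => contDiff_const.inner ℝ hΦ
  have hsupp : ∀ i, tsupport (fun x => inner ℝ (v i) (Φ x)) ⊆ tsupport Φ := fun i =>
    closure_mono (Function.support_comp_subset (inner_zero_right (v i)) Φ)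
  have hφs : ∀ i, HasCompactSupport fun x => inner ℝ (v i) (Φ x) := fun i =>
    hΦs.comp_left (inner_zero_right (v i))
  have hv1 : innerSL ℝ (v 1) ≠ 0 := fun h0 => by simpa using DFunLike.congr_fun h0 (v 1)
  have hdir : ∀ i, Tendsto
      (fun k => ∫ x, ψ x * fderiv ℝ (fun x => inner ℝ (v i) (χ k x • Φ x)) x (v i)) atTop
      (𝓝 (∫ x, (closure U).indicator ψ x * fderiv ℝ (fun x => inner ℝ (v i) (Φ x)) x (v i))) := by
    intro i
    simp_rw [inner_smul_right]
    refine IsRegionBetween.tendsto_integral_mul_fderiv_cutoff_of_level h hS hv1 hU hB hψ (hM i)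
      hψ0 hχ (hφ i) (hφs i) ((hsupp i).trans hΦB) ?_
    by_cases hi : i = 1
    · exact .inr (hi ▸ hΦl)
    · exact .inl (v.inner_eq_zero (Ne.symm hi))
  have hsplit : ∀ {u : E2 → ℝ} {g : E2 → E2}, Integrable u → ContDiff ℝ 1 g →
      HasCompactSupport g → ∫ x, u x * diver g x =
        ∑ i, ∫ x, u x * fderiv ℝ (fun x => inner ℝ (v i) (g x)) x (v i) := by
    intro u g hu hg hgs
    rw [← integral_finsetSum _ fun i _ => integrable_mul_fderiv hu (contDiff_const.inner ℝ hg)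
      (hgs.comp_left (inner_zero_right (v i))) (v i)]
    simp_rw [diver_eq_sum v (hg.differentiable one_ne_zero _), Finset.mul_sum]
  rw [hsplit (hψ.indicator isClosed_closure.measurableSet) hΦ hΦs]
  exact (tendsto_finsetSum _ fun i _ => hdir i).congr fun k =>
    (hsplit hψ ((hχ.contDiff k).smul hΦ) hΦs.smul_left).symm

end VectorLimit

section AreaTest

/-- `(g, h)` is a pair of test fields for the relaxed area on `B`. -/
structure IsAreaTest (B : Set E2) (g : E2 → E2) (h : E2 → ℝ) : Prop where
  contDiff_fst : ContDiff ℝ 1 g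
  contDiff_snd : ContDiff ℝ 1 h
  tsupport_fst_subset : tsupport g ⊆ B
  tsupport_snd_subset : tsupport h ⊆ B
  sq_add_sq_le_one : ∀ x, ‖g x‖ ^ 2 + h x ^ 2 ≤ 1

variable {B : Set E2} {g : E2 → E2} {h : E2 → ℝ} {ψ : E2 → ℝ}

theorem IsAreaTest.setIntegral_eq_integral (ht : IsAreaTest B g h) (ψ : E2 → ℝ) :
    ∫ x in B, (ψ x * diver g x + h x) = ∫ x, (ψ x * diver g x + h x) := by
  refine setIntegral_eq_integral_of_forall_compl_eq_zero fun x hx => ?_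
  rw [diver_of_notMem_tsupport fun hg => hx (ht.tsupport_fst_subset hg),
    image_eq_zero_of_notMem_tsupport fun hh => hx (ht.tsupport_snd_subset hh), mul_zero, add_zero]

theorem IsAreaTest.ofReal_integral_le_relaxedArea (ht : IsAreaTest B g h) (ψ : E2 → ℝ) :
    ENNReal.ofReal (∫ x, (ψ x * diver g x + h x)) ≤ relaxedArea B ψ := by
  rw [← ht.setIntegral_eq_integral]
  exact le_iSup_of_le g <| le_iSup_of_le h <| le_iSup_of_le ht.contDiff_fst <|
    le_iSup_of_le ht.contDiff_snd <| le_iSup_of_le ht.tsupport_fst_subset <|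
    le_iSup_of_le ht.tsupport_snd_subset <| le_iSup_of_le ht.sq_add_sq_le_one le_rfl

theorem relaxedArea_le_of_forall_isAreaTest {C : ℝ≥0∞}
    (hC : ∀ g h, IsAreaTest B g h → ENNReal.ofReal (∫ x, (ψ x * diver g x + h x)) ≤ C) :
    relaxedArea B ψ ≤ C := by
  refine iSup_le fun g => iSup_le fun h => iSup_le fun hg => iSup_le fun hh => iSup_le fun hgB =>
    iSup_le fun hhB => iSup_le fun hgh => ?_
  have ht : IsAreaTest B g h := ⟨hg, hh, hgB, hhB, hgh⟩
  exact ht.setIntegral_eq_integral ψ ▸ hC g h ht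

theorem IsAreaTest.hasCompactSupport_fst (ht : IsAreaTest B g h) (hB : IsBounded B) :
    HasCompactSupport g :=
  Metric.isCompact_of_isClosed_isBounded (isClosed_tsupport g) (hB.subset ht.tsupport_fst_subset)

theorem IsAreaTest.integrable_snd (ht : IsAreaTest B g h) (hB : IsBounded B) : Integrable h :=
  ht.contDiff_snd.continuous.integrable_of_hasCompactSupport
    (Metric.isCompact_of_isClosed_isBounded (isClosed_tsupport h)
      (hB.subset ht.tsupport_snd_subset))

theorem IsAreaTest.integrable_mul_diver_fst (ht : IsAreaTest B g h) (hB : IsBounded B)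
    (hψ : Integrable ψ) : Integrable fun x => ψ x * diver g x :=
  integrable_mul_diver hψ ht.contDiff_fst (ht.hasCompactSupport_fst hB)

theorem IsAreaTest.integral_add_integral_le_toReal (ht : IsAreaTest B g h) (hB : IsBounded B)
    (hψ : Integrable ψ) (hfin : relaxedArea B ψ ≠ ∞) :
    (∫ x, ψ x * diver g x) + ∫ x, h x ≤ (relaxedArea B ψ).toReal := by
  rw [← integral_add (ht.integrable_mul_diver_fst hB hψ) (ht.integrable_snd hB)]
  exact (ENNReal.ofReal_le_iff_le_toReal hfin).1 (ht.ofReal_integral_le_relaxedArea ψ)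

theorem IsAreaTest.norm_fst_le_one (ht : IsAreaTest B g h) (x : E2) : ‖g x‖ ≤ 1 := by
  nlinarith [ht.sq_add_sq_le_one x, sq_nonneg (h x), norm_nonneg (g x)]

theorem IsAreaTest.abs_snd_le_one (ht : IsAreaTest B g h) (x : E2) : |h x| ≤ 1 := by
  rw [← sq_le_one_iff_abs_le_one]
  nlinarith [ht.sq_add_sq_le_one x, sq_nonneg ‖g x‖]

theorem isAreaTest_smul_basis {θ : E2 → ℝ} (v : OrthonormalBasis (Fin 2) ℝ E2) (i : Fin 2)
    (hθ : ContDiff ℝ 1 θ) (hθB : tsupport θ ⊆ B) (hθ1 : ∀ x, |θ x| ≤ 1) :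
    IsAreaTest B (fun x => θ x • v i) 0 where
  contDiff_fst := hθ.smul contDiff_const
  contDiff_snd := contDiff_const
  tsupport_fst_subset := (tsupport_smul_subset_left θ _).trans hθB
  tsupport_snd_subset := by simp [tsupport]
  sq_add_sq_le_one x := by simpa [norm_smul] using hθ1 x

theorem dirVariationLE_toReal_relaxedArea (hB : IsBounded B) (hψ : Integrable ψ)
    (hfin : relaxedArea B ψ ≠ ∞) (v : OrthonormalBasis (Fin 2) ℝ E2) (i : Fin 2) :
    DirVariationLE B ψ (v i) (relaxedArea B ψ).toReal := by
  intro θ hθ _ hθB hθ1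
  have hle := (isAreaTest_smul_basis v i hθ hθB hθ1).integral_add_integral_le_toReal hB hψ hfin
  simp_rw [diver_smul_basis v i (hθ.differentiable one_ne_zero _)] at hle
  simpa using hle

theorem relaxedArea_congr_ae {ψ' : E2 → ℝ} (heq : ψ =ᵐ[volume.restrict B] ψ') :
    relaxedArea B ψ = relaxedArea B ψ' := by
  have hint : ∀ (g : E2 → E2) (h : E2 → ℝ), ∫ x in B, (ψ x * diver g x + h x) =
      ∫ x in B, (ψ' x * diver g x + h x) := fun g h =>
    integral_congr_ae (heq.mono fun x hx => by simp only [hx])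
  simp only [relaxedArea, hint]

end AreaTest

section TestFields

variable {B K : Set E2} {f g : E2 → E2} {h k : E2 → ℝ} {v : OrthonormalBasis (Fin 2) ℝ E2} {t : ℝ}

theorem sq_add_sq_le_one_iff_mem_closedBall {u : E2} {r : ℝ} :
    ‖u‖ ^ 2 + r ^ 2 ≤ 1 ↔ WithLp.toLp 2 (u, r) ∈ Metric.closedBall (0 : WithLp 2 (E2 × ℝ)) 1 := by
  rw [mem_closedBall_zero_iff, ← sq_le_one_iff₀ (norm_nonneg _), WithLp.prod_norm_sq_eq_of_L2,
    Real.norm_eq_abs, sq_abs]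
  rfl

theorem IsAreaTest.add_smul_sub (hf : IsAreaTest B f h) (hg : IsAreaTest B g k) {χ : E2 → ℝ}
    (hχ : ContDiff ℝ 1 χ) (hχ01 : ∀ x, χ x ∈ Icc (0 : ℝ) 1) :
    IsAreaTest B (fun x => f x + χ x • (g x - f x)) (fun x => h x + χ x * (k x - h x)) where
  contDiff_fst := hf.contDiff_fst.add (hχ.smul (hg.contDiff_fst.sub hf.contDiff_fst))
  contDiff_snd := hf.contDiff_snd.add (hχ.mul (hg.contDiff_snd.sub hf.contDiff_snd))
  tsupport_fst_subset := (tsupport_add _ _).trans <| union_subset hf.tsupport_fst_subset <|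
    (tsupport_smul_subset_right χ _).trans <| (tsupport_sub _ _).trans <|
    union_subset hg.tsupport_fst_subset hf.tsupport_fst_subset
  tsupport_snd_subset := (tsupport_add _ _).trans <| union_subset hf.tsupport_snd_subset <|
    tsupport_mul_subset_right.trans <| (tsupport_sub _ _).trans <|
    union_subset hg.tsupport_snd_subset hf.tsupport_snd_subset
  sq_add_sq_le_one x := sq_add_sq_le_one_iff_mem_closedBall.2 <|
    (convex_closedBall (0 : WithLp 2 (E2 × ℝ)) 1).add_smul_sub_mem
      (sq_add_sq_le_one_iff_mem_closedBall.1 (hf.sq_add_sq_le_one x))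
      (sq_add_sq_le_one_iff_mem_closedBall.1 (hg.sq_add_sq_le_one x)) (hχ01 x)

theorem exists_isAreaTest_diver_eq_zero (hB : IsOpen B) (hK : IsCompact K) (hKB : K ⊆ B)
    (hg : ContDiff ℝ 1 g) (hg1 : ∀ x, ‖g x‖ ≤ 1) (v : OrthonormalBasis (Fin 2) ℝ E2) (t : ℝ) :
    ∃ G : E2 → E2, IsAreaTest B G 0 ∧ (∀ x ∈ K, diver G x = 0) ∧
      ∀ x ∈ K, inner ℝ (v 1) x = t → inner ℝ (v 1) (G x) = inner ℝ (v 1) (g x) := by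
  obtain ⟨κ, hκ, -, hκB, hκ1, hκ01⟩ := exists_contDiff_eventually_eq_one_of_isCompact hK hB hKB
  let p : E2 → E2 := fun x => x - (inner ℝ (v 1) x - t) • v 1
  let f : E2 → ℝ := fun x => inner ℝ (v 1) (g (p x))
  have hp : ContDiff ℝ 1 p := contDiff_id.sub
    (((contDiff_const.inner ℝ contDiff_id).sub contDiff_const).smul contDiff_const)
  have hf : ContDiff ℝ 1 f := contDiff_const.inner ℝ (hg.comp hp)
  have hf1 : ∀ x, |f x| ≤ 1 := fun x =>
    (abs_real_inner_le_norm _ _).trans (by simpa using hg1 (p x))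
  have hfv : ∀ x, fderiv ℝ f x (v 1) = 0 := fun x => by
    have hconst : (fun s : ℝ => f (x + s • v 1)) = fun _ => f x := by
      ext s
      have hps : p (x + s • v 1) = p x := by
        simp only [p, inner_add_right, inner_smul_right, v.inner_eq_one]
        module
      simp only [f, hps]
    rw [← (hf.differentiable one_ne_zero x).lineDeriv_eq_fderiv, lineDeriv, hconst, deriv_const]
  refine ⟨fun x => (κ x * f x) • v 1, isAreaTest_smul_basis v 1 (hκ.mul hf)
    (tsupport_mul_subset_left.trans hκB) fun x => ?_, fun x hx => ?_, fun x hx hxt => ?_⟩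
  · rw [abs_mul, abs_of_nonneg (hκ01 x).1]
    exact mul_le_one₀ (hκ01 x).2 (abs_nonneg _) (hf1 x)
  · have hnear : (fun y => κ y * f y) =ᶠ[𝓝 x] f :=
      (hκ1.filter_mono (nhds_le_nhdsSet hx)).mono fun y hy => by simp only [hy, one_mul]
    rw [diver_smul_basis v 1 ((hκ.mul hf).differentiable one_ne_zero x), hnear.fderiv_eq, hfv]
  · have hpx : p x = x := by simp only [p, hxt, sub_self, zero_smul, sub_zero]
    simp only [inner_smul_right, v.inner_eq_one, hκ1.self_of_nhdsSet x hx, f, hpx, one_mul, mul_one]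

end TestFields

section CutoffIntegral

variable {X : Type*} [NormedAddCommGroup X] [NormedSpace ℝ X]

theorem IsCutoffSeq.tendsto_integral_mul [MeasurableSpace X] [BorelSpace X] {μ : Measure X}
    {χ : ℕ → X → ℝ} {K : Set X} (hχ : IsCutoffSeq χ K) (hK : IsClosed K) {f : X → ℝ}
    (hf : Integrable f μ) :
    Tendsto (fun k => ∫ x, χ k x * f x ∂μ) atTop (𝓝 (∫ x in K, f x ∂μ)) := by
  rw [← integral_indicator hK.measurableSet]
  refine tendsto_integral_of_dominated_convergence (fun x => |f x|)
    (fun k => (hχ.contDiff k).continuous.aestronglyMeasurable.mul hf.aestronglyMeasurable) hf.abs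
    (fun k => Eventually.of_forall fun x => hχ.abs_mul_le k x _)
    (Eventually.of_forall fun x => ?_)
  by_cases hx : x ∈ K
  · simp only [hχ.eq_one _ x hx, one_mul, indicator_of_mem hx, tendsto_const_nhds_iff]
  · rw [indicator_of_notMem hx]
    exact tendsto_const_nhds.congr' ((hχ.eventually_mul_eq_zero (.inl hx)).mono fun k hk => hk.symm)

end CutoffIntegral

section VanishingOnRegion

variable {S U B : Set E2} {t : ℝ} {ψ k : E2 → ℝ} {g G : E2 → E2}
  {v : OrthonormalBasis (Fin 2) ℝ E2}

theorem IsAreaTest.integral_interpolate_le {χ : E2 → ℝ} (hg : IsAreaTest B g k)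
    (hG : IsAreaTest B G 0) (hχ : ContDiff ℝ 1 χ) (hχ01 : ∀ x, χ x ∈ Icc (0 : ℝ) 1)
    (hB : IsBounded B) (hψ : Integrable ψ) (hfin : relaxedArea B ψ ≠ ∞) :
    (∫ x, ψ x * diver g x) + (∫ x, ψ x * diver (fun y => χ y • (G y - g y)) x) +
      ((∫ x, k x) - ∫ x, χ x * k x) ≤ (relaxedArea B ψ).toReal := by
  have hc : ContDiff ℝ 1 fun y => χ y • (G y - g y) := hχ.smul (hG.contDiff_fst.sub hg.contDiff_fst)
  have hΦs : HasCompactSupport fun y => G y - g y :=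
    (hG.hasCompactSupport_fst hB).sub (hg.hasCompactSupport_fst hB)
  have hcs : HasCompactSupport fun y => χ y • (G y - g y) :=
    hΦs.smul_left (f := χ)
  have hk := hg.integrable_snd hB
  have hχk : Integrable fun x => χ x * k x := hk.bdd_mul hχ.continuous.aestronglyMeasurable
    (Eventually.of_forall fun x => abs_le.2 ⟨by linarith [(hχ01 x).1], (hχ01 x).2⟩)
  have hdiver : ∀ x, ψ x * diver (fun y => g y + χ y • (G y - g y)) x =
      ψ x * diver g x + ψ x * diver (fun y => χ y • (G y - g y)) x := fun x => by
    rw [diver_add (hg.contDiff_fst.differentiable one_ne_zero x)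
      (hc.differentiable one_ne_zero x), mul_add]
  have hsnd : ∀ x, k x + χ x * ((0 : E2 → ℝ) x - k x) = k x - χ x * k x := fun x => by
    rw [Pi.zero_apply, zero_sub, mul_neg, sub_eq_add_neg]
  rw [← integral_add (hg.integrable_mul_diver_fst hB hψ) (integrable_mul_diver hψ hc hcs),
    ← integral_sub hk hχk]
  simp_rw [← hdiver, ← hsnd]
  exact (hg.add_smul_sub hG hχ hχ01).integral_add_integral_le_toReal hB hψ hfin

theorem integral_indicator_mul_diver_sub {K : Set E2} (hK : MeasurableSet K)
    (hG : Differentiable ℝ G) (hg : Differentiable ℝ g) (hG0 : ∀ x ∈ K, diver G x = 0) :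
    ∫ x, K.indicator ψ x * diver (fun y => G y - g y) x = -∫ x in K, ψ x * diver g x := by
  rw [← integral_indicator hK, ← integral_neg]
  refine integral_congr_ae (Eventually.of_forall fun x => ?_)
  by_cases hx : x ∈ K
  · simp [hx, diver_sub (hG x) (hg x), hG0 x hx]
  · simp [hx]

theorem IsRegionBetween.setIntegral_compl_add_le
    (h : IsRegionBetween (closure S) {x | inner ℝ (v 1) x = t} U) (hS : PiecewiseLipschitz S)
    (hU : UncutByConvex U) (hB : IsOpen B) (hBb : IsBounded B) (hψ : Integrable ψ)
    (hψ0 : ∀ᵐ x, x ∈ closure S → ψ x = 0) (hfin : relaxedArea B ψ ≠ ∞)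
    (hg : IsAreaTest B g k) (hG : IsAreaTest B G 0) (hG0 : ∀ x ∈ closure U, diver G x = 0)
    (hGl : ∀ x ∈ closure U, inner ℝ (v 1) x = t → inner ℝ (v 1) (G x) = inner ℝ (v 1) (g x)) :
    (∫ x in (closure U)ᶜ, ψ x * diver g x) + ∫ x in (closure U)ᶜ, k x ≤
      (relaxedArea B ψ).toReal := by
  obtain ⟨χ, hχ⟩ := exists_isCutoffSeq (isClosed_closure (s := U))
  have hlim := h.tendsto_integral_mul_diver_cutoff hS hU hB hψ
    (dirVariationLE_toReal_relaxedArea hBb hψ hfin v) hψ0 hχ (hG.contDiff_fst.sub hg.contDiff_fst)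
    ((hG.hasCompactSupport_fst hBb).sub (hg.hasCompactSupport_fst hBb))
    ((tsupport_sub G g).trans (union_subset hG.tsupport_fst_subset hg.tsupport_fst_subset))
    fun x hx hxt => by rw [inner_sub_right, hGl x hx hxt, sub_self]
  rw [integral_indicator_mul_diver_sub isClosed_closure.measurableSet
    (hG.contDiff_fst.differentiable one_ne_zero) (hg.contDiff_fst.differentiable one_ne_zero)
    hG0] at hlim
  have hklim := hχ.tendsto_integral_mul isClosed_closure (hg.integrable_snd hBb)
  rw [setIntegral_compl isClosed_closure.measurableSet (hg.integrable_mul_diver_fst hBb hψ),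
    setIntegral_compl isClosed_closure.measurableSet (hg.integrable_snd hBb), sub_eq_add_neg]
  exact le_of_tendsto' ((tendsto_const_nhds.add hlim).add (tendsto_const_nhds.sub hklim))
    fun j => hg.integral_interpolate_le hG (hχ.contDiff j) (hχ.mem_Icc j) hBb hψ hfin

theorem IsRegionBetween.relaxedArea_indicator_compl_closure_le
    (h : IsRegionBetween (closure S) {x | inner ℝ (v 1) x = t} U) (hS : PiecewiseLipschitz S)
    (hU : UncutByConvex U) (hB : IsOpen B) (hBb : IsBounded B) (hUB : closure U ⊆ B)
    (hψ : Integrable ψ) (hψ0 : ∀ᵐ x, x ∈ closure S → ψ x = 0) :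
    relaxedArea B ((closure U)ᶜ.indicator ψ) ≤ relaxedArea B ψ + volume (closure U) := by
  by_cases hfin : relaxedArea B ψ = ∞
  · simp only [hfin, top_add, le_top]
  have hKc : IsCompact (closure U) := (hBb.subset (subset_closure.trans hUB)).isCompact_closure
  have hKm : MeasurableSet (closure U) := isClosed_closure.measurableSet
  refine relaxedArea_le_of_forall_isAreaTest fun g k hg => ?_
  obtain ⟨G, hG, hG0, hGl⟩ :=
    exists_isAreaTest_diver_eq_zero hB hKc hUB hg.contDiff_fst hg.norm_fst_le_one v t
  have hle := h.setIntegral_compl_add_le hS hU hB hBb hψ hψ0 hfin hg hG hG0 hGl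
  have hk : ∫ x in closure U, k x ≤ volume.real (closure U) := by
    have hnorm := norm_setIntegral_le_of_norm_le_const (f := k) (μ := volume) hKc.measure_lt_top
      fun x _ => hg.abs_snd_le_one x
    simpa only [one_mul] using (le_abs_self _).trans hnorm
  rw [ENNReal.ofReal_le_iff_le_toReal (ENNReal.add_ne_top.2 ⟨hfin, hKc.measure_lt_top.ne⟩),
    ENNReal.toReal_add hfin hKc.measure_lt_top.ne]
  calc ∫ x, ((closure U)ᶜ.indicator ψ x * diver g x + k x)
      = (∫ x in (closure U)ᶜ, ψ x * diver g x) + ∫ x, k x := by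
        rw [integral_add (hg.integrable_mul_diver_fst hBb (hψ.indicator hKm.compl))
          (hg.integrable_snd hBb), ← integral_indicator hKm.compl]
        simp_rw [indicator_mul_left]
    _ = (∫ x in (closure U)ᶜ, ψ x * diver g x) + (∫ x in (closure U)ᶜ, k x) +
          ∫ x in closure U, k x := by
        rw [← integral_add_compl hKm (hg.integrable_snd hBb)]
        ring
    _ ≤ (relaxedArea B ψ).toReal + (volume (closure U)).toReal := add_le_add hle hk

theorem exists_orthonormalBasis_level_eq {f : E2 →L[ℝ] ℝ} (hf : f ≠ 0) (t : ℝ) :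
    ∃ (v : OrthonormalBasis (Fin 2) ℝ E2) (r : ℝ), {x | f x = t} = {x | inner ℝ (v 1) x = r} := by
  obtain ⟨w, rfl⟩ := (InnerProductSpace.toDual ℝ E2).surjective f
  have hw : w ≠ 0 := fun hw => hf (by rw [hw, map_zero])
  have ho : Orthonormal ℝ (({1} : Set (Fin 2)).domRestrict fun _ => ‖w‖⁻¹ • w) :=
    ⟨fun _ => norm_smul_inv_norm hw, fun i j hij => absurd (Subsingleton.elim i j) hij⟩
  obtain ⟨v, hv⟩ := ho.exists_orthonormalBasis_extension_of_card_eq (by simp)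
  refine ⟨v, ‖w‖⁻¹ * t, ext fun x => ?_⟩
  rw [mem_ofPred_eq, mem_ofPred_eq, hv 1 rfl, real_inner_smul_left,
    mul_right_inj' (inv_ne_zero (norm_ne_zero_iff.2 hw)), InnerProductSpace.toDual_apply_apply]

theorem IsRegionBetween.relaxedArea_indicator_compl_le_of_uncutByConvex {f : E2 →L[ℝ] ℝ}
    (h : IsRegionBetween (closure S) {x | f x = t} U) (hS : PiecewiseLipschitz S) (hf : f ≠ 0)
    (hU : UncutByConvex U) (hB : IsOpen B) (hBb : IsBounded B) (hUB : closure U ⊆ B)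
    (hψ : Integrable ψ) (hψ0 : ∀ᵐ x, x ∈ closure S → ψ x = 0) :
    relaxedArea B (Uᶜ.indicator ψ) ≤ relaxedArea B ψ + volume U := by
  have hae : U =ᵐ[volume] closure U :=
    (closure_ae_eq_of_null_frontier (h.volume_frontier_eq_zero hS hf)).symm
  obtain ⟨v, r, hvr⟩ := exists_orthonormalBasis_level_eq hf t
  rw [relaxedArea_congr_ae (ae_restrict_of_ae (indicator_ae_eq_of_ae_eq_set hae.compl)),
    measure_congr hae]
  exact (hvr ▸ h).relaxedArea_indicator_compl_closure_le hS hU hB hBb hUB hψ hψ0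

end VanishingOnRegion

section Components

theorem disjointed_eq_self_or_eq_empty {X : Type*} {D : ℕ → Set X}
    (hD : ∀ i j, D i = D j ∨ Disjoint (D i) (D j)) (j : ℕ) :
    disjointed D j = D j ∨ disjointed D j = ∅ := by
  by_cases h : ∃ i < j, D i = D j
  · obtain ⟨i, hij, hi⟩ := h
    refine Or.inr (eq_empty_of_forall_notMem fun x hx => ?_)
    rw [disjointed_eq_inter_compl] at hx
    exact mem_iInter₂.1 hx.2 i hij (hi ▸ hx.1)
  · push Not at h
    exact Or.inl (disjointed_eq_self fun i hij => (hD i j).resolve_left (h i hij))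

variable {X : Type*} [TopologicalSpace X] {U : Set X}

theorem connectedComponentIn_eq_or_disjoint (x y : X) :
    connectedComponentIn U x = connectedComponentIn U y ∨
      Disjoint (connectedComponentIn U x) (connectedComponentIn U y) := by
  refine or_iff_not_imp_right.2 fun h => ?_
  obtain ⟨z, hzx, hzy⟩ := not_disjoint_iff.1 h
  rw [connectedComponentIn_eq hzx, connectedComponentIn_eq hzy]

variable [LocallyConnectedSpace X]

theorem frontier_connectedComponentIn_subset (hU : IsOpen U) (x : X) :
    frontier (connectedComponentIn U x) ⊆ frontier U := by
  intro y hy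
  rw [hU.connectedComponentIn.frontier_eq] at hy
  rw [hU.frontier_eq]
  refine ⟨closure_mono (connectedComponentIn_subset U x) hy.1, fun hyU => hy.2 ?_⟩
  obtain ⟨z, hzy, hzx⟩ := mem_closure_iff.1 hy.1 _ hU.connectedComponentIn
    (mem_connectedComponentIn hyU)
  rw [connectedComponentIn_eq hzx, ← connectedComponentIn_eq hzy]
  exact mem_connectedComponentIn hyU

theorem iUnion_connectedComponentIn_of_denseRange {ι : Type*} {d : ι → X} (hd : DenseRange d)
    (hU : IsOpen U) : ⋃ i, connectedComponentIn U (d i) = U := by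
  refine (iUnion_subset fun i => connectedComponentIn_subset U _).antisymm fun x hx => ?_
  obtain ⟨i, hi⟩ := hd.exists_mem_open hU.connectedComponentIn ⟨x, mem_connectedComponentIn hx⟩
  refine mem_iUnion.2 ⟨i, ?_⟩
  rw [← connectedComponentIn_eq hi]
  exact mem_connectedComponentIn hx

theorem exists_seq_isOpen_isPreconnected_disjoint [TopologicalSpace.SeparableSpace X]
    (hU : IsOpen U) :
    ∃ C : ℕ → Set X, (∀ j, IsOpen (C j)) ∧ (∀ j, IsPreconnected (C j)) ∧
      (∀ j, frontier (C j) ⊆ frontier U) ∧ Pairwise (Function.onFun Disjoint C) ∧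
      ⋃ j, C j = U := by
  rcases isEmpty_or_nonempty X with hX | hX
  · exact ⟨fun _ => ∅, by simp [Pairwise, isPreconnected_empty, Subsingleton.elim U ∅]⟩
  let D : ℕ → Set X := fun j => connectedComponentIn U (TopologicalSpace.denseSeq X j)
  have hD : ∀ j, disjointed D j = D j ∨ disjointed D j = ∅ :=
    disjointed_eq_self_or_eq_empty fun i j => connectedComponentIn_eq_or_disjoint _ _
  refine ⟨disjointed D, fun j => ?_, fun j => ?_, fun j => ?_, disjoint_disjointed D, ?_⟩
  · rcases hD j with h | h <;> rw [h]
    exacts [hU.connectedComponentIn, isOpen_empty]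
  · rcases hD j with h | h <;> rw [h]
    exacts [isPreconnected_connectedComponentIn, isPreconnected_empty]
  · rcases hD j with h | h <;> rw [h]
    exacts [frontier_connectedComponentIn_subset hU _, frontier_empty.trans_subset (empty_subset _)]
  · exact (iUnion_disjointed (f := D)).trans
      (iUnion_connectedComponentIn_of_denseRange (TopologicalSpace.denseRange_denseSeq X) hU)

end Components

section CountableUnion

variable {B F : Set E2} {ψ : E2 → ℝ}

theorem relaxedArea_le_of_dominated {u : ℕ → E2 → ℝ} {bound : E2 → ℝ} {C : ℝ≥0∞}
    (hB : IsBounded B) (hbound : Integrable bound) (hu : ∀ n, AEStronglyMeasurable (u n))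
    (hub : ∀ n, ∀ᵐ x, ‖u n x‖ ≤ bound x)
    (hlim : ∀ᵐ x, Tendsto (fun n => u n x) atTop (𝓝 (ψ x)))
    (hC : ∀ n, relaxedArea B (u n) ≤ C) : relaxedArea B ψ ≤ C := by
  refine relaxedArea_le_of_forall_isAreaTest fun g h ht => ?_
  have hint : Tendsto (fun n => ∫ x, (u n x * diver g x + h x)) atTop
      (𝓝 (∫ x, (ψ x * diver g x + h x))) := by
    refine tendsto_integral_of_dominated_convergence (fun x => ‖bound x * diver g x‖ + ‖h x‖)
      (fun n => ((hu n).mul (continuous_diver ht.contDiff_fst).aestronglyMeasurable).add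
        ht.contDiff_snd.continuous.aestronglyMeasurable)
      ((ht.integrable_mul_diver_fst hB hbound).norm.add (ht.integrable_snd hB).norm)
      (fun n => (hub n).mono fun x hx => (norm_add_le _ _).trans ?_)
      (hlim.mono fun x hx => (hx.mul_const _).add_const _)
    rw [norm_mul, norm_mul]
    gcongr
    exact hx.trans (le_abs_self _)
  exact le_of_tendsto' ((ENNReal.continuous_ofReal.tendsto _).comp hint)
    fun n => (ht.ofReal_integral_le_relaxedArea (u n)).trans (hC n)

section Step

variable {C : ℕ → Set E2} (hC : ∀ j, MeasurableSet (C j))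
  (hdisj : Pairwise (Function.onFun Disjoint C))
  (hstep : ∀ j (φ : E2 → ℝ), Integrable φ → (∀ᵐ x, x ∈ F → φ x = 0) →
    relaxedArea B ((C j)ᶜ.indicator φ) ≤ relaxedArea B φ + volume (C j))
  (hψ : Integrable ψ) (hψ0 : ∀ᵐ x, x ∈ F → ψ x = 0)

include hC hdisj hstep hψ hψ0

theorem relaxedArea_indicator_compl_biUnion_range_le (n : ℕ) :
    relaxedArea B ((⋃ j ∈ Finset.range n, C j)ᶜ.indicator ψ) ≤
      relaxedArea B ψ + volume (⋃ j ∈ Finset.range n, C j) := by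
  induction n with
  | zero => simp
  | succ n ih =>
    have hVm : MeasurableSet (⋃ j ∈ Finset.range n, C j) :=
      Finset.measurableSet_biUnion _ fun j _ => hC j
    have hCV : Disjoint (C n) (⋃ j ∈ Finset.range n, C j) :=
      disjoint_iUnion₂_right.2 fun j hj => hdisj (Finset.mem_range.1 hj).ne'
    have hle := hstep n _ (hψ.indicator hVm.compl)
      (hψ0.mono fun x hx hxF => indicator_apply_eq_zero.2 fun _ => hx hxF)
    rw [indicator_indicator, ← compl_union] at hle
    rw [Finset.range_add_one, Finset.set_biUnion_insert, measure_union hCV hVm,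
      add_comm (volume (C n)), ← add_assoc]
    exact hle.trans (add_le_add_left ih _)

theorem relaxedArea_indicator_compl_iUnion_le (hB : IsBounded B) :
    relaxedArea B ((⋃ j, C j)ᶜ.indicator ψ) ≤ relaxedArea B ψ + volume (⋃ j, C j) := by
  let V : ℕ → Set E2 := fun n => ⋃ j ∈ Finset.range n, C j
  have hVm : ∀ n, MeasurableSet (V n) := fun n => Finset.measurableSet_biUnion _ fun j _ => hC j
  have hVC : ∀ n, V n ⊆ ⋃ j, C j := fun n => iUnion₂_subset fun j _ => subset_iUnion C j
  refine relaxedArea_le_of_dominated (u := fun n => (V n)ᶜ.indicator ψ) hB hψ.norm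
    (fun n => (hψ.indicator (hVm n).compl).aestronglyMeasurable)
    (fun n => Eventually.of_forall fun x => norm_indicator_le_norm_self _ _)
    (Eventually.of_forall fun x => tendsto_const_nhds.congr' ?_)
    (fun n => (relaxedArea_indicator_compl_biUnion_range_le hC hdisj hstep hψ hψ0 n).trans
      (add_le_add_right (measure_mono (hVC n)) _))
  by_cases hx : x ∈ ⋃ j, C j
  · obtain ⟨j, hj⟩ := mem_iUnion.1 hx
    filter_upwards [eventually_gt_atTop j] with n hn
    have hxV : x ∈ V n := mem_biUnion (Finset.mem_coe.2 (Finset.mem_range.2 hn)) hj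
    rw [indicator_of_notMem (not_not.2 hx), indicator_of_notMem (not_not.2 hxV)]
  · refine Eventually.of_forall fun n => ?_
    have hxV : x ∈ (V n)ᶜ := fun hxV => hx (hVC n hxV)
    simp only [indicator_of_mem (mem_compl hx), indicator_of_mem hxV]

end Step

theorem IsRegionBetween.relaxedArea_indicator_compl_le {S U : Set E2} {f : E2 →L[ℝ] ℝ} {t : ℝ}
    (h : IsRegionBetween (closure S) {x | f x = t} U) (hS : PiecewiseLipschitz S) (hf : f ≠ 0)
    (hB : IsOpen B) (hBb : IsBounded B) (hUB : closure U ⊆ B) (hψ : Integrable ψ)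
    (hψ0 : ∀ᵐ x, x ∈ closure S → ψ x = 0) :
    relaxedArea B (Uᶜ.indicator ψ) ≤ relaxedArea B ψ + volume U := by
  obtain ⟨C, hCo, hCc, hCfr, hdisj, rfl⟩ := exists_seq_isOpen_isPreconnected_disjoint h.isOpen
  refine relaxedArea_indicator_compl_iUnion_le (fun j => (hCo j).measurableSet) hdisj
    (fun j φ hφ hφ0 => ?_) hψ hψ0 hBb
  have hCU : C j ⊆ ⋃ i, C i := subset_iUnion C j
  have hj : IsRegionBetween (closure S) {x | f x = t} (C j) :=
    ⟨h.isClosed, hCo j, h.disjoint.mono_left hCU, (hCfr j).trans h.frontier_subset⟩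
  exact hj.relaxedArea_indicator_compl_le_of_uncutByConvex hS hf
    (uncutByConvex_of_isPreconnected (hCc j)) hB hBb ((closure_mono hCU).trans hUB) hφ hφ0

end CountableUnion

section SupportingLine

variable {X : Type*} [NormedAddCommGroup X] [NormedSpace ℝ X]

theorem exists_ne_zero_apply_eq_of_segment_subset_frontier {H : Set X} (hH : Convex ℝ H)
    (hne : (interior H).Nonempty) {a b : X}
    (hl : segment ℝ a b ⊆ frontier H) :
    ∃ f : X →L[ℝ] ℝ, f ≠ 0 ∧ ∀ x ∈ segment ℝ a b, f x = f a := by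
  obtain ⟨f, hf⟩ := geometric_hahn_banach_open_point hH.interior isOpen_interior
    (hl (midpoint_mem_segment a b)).2
  have hle : ∀ x ∈ segment ℝ a b, f x ≤ f (midpoint ℝ a b) := fun x hx =>
    closure_minimal (fun y hy => (hf y hy).le) (isClosed_le f.continuous continuous_const)
      (hH.closure_interior_eq_closure_of_nonempty_interior hne ▸ (hl hx).1)
  have hmid : f (midpoint ℝ a b) = (f a + f b) / 2 := by
    rw [midpoint_eq_smul_add, map_smul, map_add, invOf_eq_inv, smul_eq_mul, inv_mul_eq_div]
  have hab : f a = f b := by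
    linarith [hle a (left_mem_segment ℝ a b), hle b (right_mem_segment ℝ a b)]
  refine ⟨f, ?_, ?_⟩
  · rintro rfl
    obtain ⟨y, hy⟩ := hne
    exact (hf y hy).ne rfl
  · rintro x ⟨p, q, -, -, hpq, rfl⟩
    rw [map_add, map_smul, map_smul, ← hab, ← add_smul, hpq, one_smul]

end SupportingLine

theorem stmt_19_general {S B U : Set E2} {ψ : E2 → ℝ} {a b : E2} (hS : PiecewiseLipschitz S)
    (hB : IsOpen B) (hBb : IsBounded B) (hUB : closure U ⊆ B)
    (hψ : IntegrableOn ψ B) (hψ0 : ∀ᵐ x, x ∈ closure S → ψ x = 0)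
    (hl : segment ℝ a b ⊆ frontier (convexHull ℝ (closure S))) (hUo : IsOpen U)
    (hUne : U.Nonempty) (hUsub : U ⊆ convexHull ℝ (closure S)) (hUS : U ∩ closure S = ∅)
    (hUfr : frontier U ⊆ frontier (closure S) ∪ segment ℝ a b) :
    relaxedArea B (Uᶜ.indicator ψ) + volume (closure S) ≤
      relaxedArea B ψ + volume (closure S ∪ closure U) := by
  obtain ⟨f, hf, hfl⟩ := exists_ne_zero_apply_eq_of_segment_subset_frontier (convex_convexHull ℝ _)
    (hUne.mono (interior_maximal hUsub hUo)) hl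
  have hU : IsRegionBetween (closure S) {x | f x = f a} U :=
    ⟨isClosed_closure, hUo, disjoint_iff_inter_eq_empty.2 hUS,
      hUfr.trans (union_subset_union_right _ hfl)⟩
  have hle := hU.relaxedArea_indicator_compl_le hS hf hB hBb hUB
    (hψ.integrable_indicator hB.measurableSet)
    (hψ0.mono fun x hx hxS => indicator_apply_eq_zero.2 fun _ => hx hxS)
  have hψB : B.indicator ψ =ᵐ[volume.restrict B] ψ := indicator_ae_eq_restrict hB.measurableSet
  rw [relaxedArea_congr_ae hψB, relaxedArea_congr_ae (hψB.indicator)] at hle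
  calc relaxedArea B (Uᶜ.indicator ψ) + volume (closure S)
      ≤ relaxedArea B ψ + volume U + volume (closure S) := by gcongr
    _ = relaxedArea B ψ + volume (closure S ∪ U) := by
        rw [measure_union hU.disjoint.symm hUo.measurableSet, add_assoc, add_comm (volume U)]
    _ ≤ relaxedArea B ψ + volume (closure S ∪ closure U) := by
        gcongr
        exact subset_closure

/-- Reduction of energy, base case: let `F₁ ⊆ closure Ω` be the closure of a
piecewise Lipschitz set, `ψ ∈ BV(B)` with `ψ = 0` a.e. on `F₁`, `l = [a,b]` a
segment of `∂(conv F₁) \ ∂F₁`, and `U` the open region enclosed between `∂F₁`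
and `l`. Setting `ψ' = 0` on `U` and `ψ' = ψ` elsewhere, one has
`𝒜(ψ'; B) − |F₁ ∪ Ū| ≤ 𝒜(ψ; B) − |F₁|`. -/
theorem stmt_19 (Ω : Set E2) (hΩo : IsOpen Ω) (hΩb : IsBounded Ω) (hΩc : Convex ℝ Ω)
    (c : E2) (R : ℝ) (hB : closure Ω ⊆ Metric.ball c R)
    (F₁ : Set E2) (hF₁c : IsClosed F₁) (hF₁sub : F₁ ⊆ closure Ω) (hF₁ne : F₁.Nonempty)
    (hF₁pl : ∃ S, PiecewiseLipschitz S ∧ F₁ = closure S)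
    (ψ : E2 → ℝ) (hψint : IntegrableOn ψ (Metric.ball c R))
    (hψ0 : ∀ᵐ x ∂(volume : Measure E2), x ∈ F₁ → ψ x = 0)
    (a b : E2) (hab : a ≠ b)
    (ha : a ∈ frontier F₁) (hb : b ∈ frontier F₁)
    (hl : segment ℝ a b ⊆ frontier (convexHull ℝ F₁))
    (hl2 : (segment ℝ a b \ {a, b}) ∩ frontier F₁ = ∅)
    (U : Set E2) (hUo : IsOpen U) (hUne : U.Nonempty)
    (hUsub : U ⊆ convexHull ℝ F₁) (hUF : U ∩ F₁ = ∅)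
    (hUfr : frontier U ⊆ frontier F₁ ∪ segment ℝ a b) :
    relaxedArea (Metric.ball c R) (Set.indicator Uᶜ ψ) + volume F₁ ≤
      relaxedArea (Metric.ball c R) ψ + volume (F₁ ∪ closure U) := by
  obtain ⟨S, hS, rfl⟩ := hF₁pl
  have hUB : closure U ⊆ Metric.ball c R :=
    (closure_minimal (hUsub.trans (convexHull_min hF₁sub hΩc.closure)) isClosed_closure).trans hB
  exact stmt_19_general hS Metric.isOpen_ball Metric.isBounded_ball hUB hψint hψ0 hl hUo hUne hUsub
    hUF hUfr
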